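/- arXiv:2009.09389 — 3 statements merged into one kernel-verified Lean document; each statement's English description precedes it below -/
import Mathlib

section
/- Let φ : ℝ² ∖ {0} → ℝ be given by φ(x) = (2π)⁻¹ log‖x‖ (the fundamental solution of the two-dimensional Laplace operator). Then for every smooth compactly supported function f : ℝ² → ℝ, the function x ↦ φ(x)·Δf(x) is Lebesgue integrable on ℝ² and ∫_{ℝ²} φ(x) Δf(x) dx = f(0), where Δf denotes the sum of the second partial derivatives of f. -/
/-!
The singular potential is regularised: for `ε > 0` the function `u(x, y) = log (x² + y² + ε)` is
smooth on the whole plane and satisfies `Δu = 4ε / (x² + y² + ε)²`. Integrating by parts twice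
against the compactly supported `f` gives `∫ u Δf = ∫ 4ε / (x² + y² + ε)² f`
(`integral_log_mul_laplacian`), with no boundary terms.

Let `ε = c⁻²` with `c → ∞`. On the right, `4ε / (|p|² + ε)² = 4π c² K(c p)` where
`K(p) = π⁻¹ (1 + |p|²)⁻²` has total mass one (computed in polar coordinates in `integral_kernel`),
so these are peak functions at the origin and the integrals converge to `4π f(0)`
(`tendsto_kernel`). On the left, dominated convergence yields `∫ log (x² + y²) Δf = 4π ∫ φ Δf`.
The dominating function comes from `|log (x² + y² + ε)| ≤ 2 |log x| + x² + y²` for `x ≠ 0` and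
`0 ≤ ε ≤ 1` (`abs_log_add_le`): its right side is locally integrable because `log` is locally
integrable on the line. The case `ε = 0` of the bound also gives integrability of `φ Δf`.
-/

open MeasureTheory Filter Topology Set

/-- Two integrations by parts in the direction `v`, moving a second line derivative from the
compactly supported `g` to `u`. -/
theorem ibp_twice {u u₁ u₂ g g₁ g₂ : ℝ × ℝ → ℝ} {v : ℝ × ℝ}
    (hu : Continuous u) (hu₁ : Continuous u₁) (hu₂ : Continuous u₂)
    (hg : Continuous g) (hg₁ : Continuous g₁) (hg₂ : Continuous g₂)
    (cg : HasCompactSupport g) (cg₁ : HasCompactSupport g₁) (cg₂ : HasCompactSupport g₂)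
    (du : ∀ p, HasLineDerivAt ℝ u (u₁ p) p v) (du₁ : ∀ p, HasLineDerivAt ℝ u₁ (u₂ p) p v)
    (dg : ∀ p, HasLineDerivAt ℝ g (g₁ p) p v) (dg₁ : ∀ p, HasLineDerivAt ℝ g₁ (g₂ p) p v) :
    ∫ p, u p * g₂ p = ∫ p, u₂ p * g p := by
  have key : ∀ {a b : ℝ × ℝ → ℝ}, Continuous a → Continuous b → HasCompactSupport b →
      Integrable (fun p => a p * b p) := fun ha hb cb =>
    (ha.mul hb).integrable_of_hasCompactSupport cb.mul_left
  have h1 := integral_bilinear_hasLineDerivAt_right_eq_neg_left_of_integrable (μ := volume)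
    (B := ContinuousLinearMap.mul ℝ ℝ) (key hu₁ hg₁ cg₁) (key hu hg₂ cg₂) (key hu hg₁ cg₁)
    (fun p _ => du p) (fun p _ => dg₁ p)
  have h2 := integral_bilinear_hasLineDerivAt_right_eq_neg_left_of_integrable (μ := volume)
    (B := ContinuousLinearMap.mul ℝ ℝ) (key hu₂ hg cg) (key hu₁ hg₁ cg₁) (key hu₁ hg cg)
    (fun p _ => du₁ p) (fun p _ => dg p)
  simp only [ContinuousLinearMap.mul_apply'] at h1 h2
  rw [h1, h2, neg_neg]

theorem hasLineDerivAt_log_fst {ε : ℝ} (hε : 0 < ε) (p : ℝ × ℝ) :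
    HasLineDerivAt ℝ (fun q : ℝ × ℝ => Real.log (q.1 ^ 2 + q.2 ^ 2 + ε))
      (2 * p.1 / (p.1 ^ 2 + p.2 ^ 2 + ε)) p (1, 0) := by
  have hs : (p.1 + 0) ^ 2 + p.2 ^ 2 + ε ≠ 0 := by positivity
  have := ((((hasDerivAt_id (0 : ℝ)).const_add p.1).pow 2).add_const (p.2 ^ 2)
    |>.add_const ε).log (by simpa using hs)
  simpa [HasLineDerivAt] using this

theorem hasLineDerivAt_log_fst_fst {ε : ℝ} (hε : 0 < ε) (p : ℝ × ℝ) :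
    HasLineDerivAt ℝ (fun q : ℝ × ℝ => 2 * q.1 / (q.1 ^ 2 + q.2 ^ 2 + ε))
      (2 / (p.1 ^ 2 + p.2 ^ 2 + ε) - 4 * p.1 ^ 2 / (p.1 ^ 2 + p.2 ^ 2 + ε) ^ 2) p (1, 0) := by
  have hs : p.1 ^ 2 + p.2 ^ 2 + ε ≠ 0 := by positivity
  have := (((hasDerivAt_id (0 : ℝ)).const_add p.1).const_mul 2).div
    ((((hasDerivAt_id (0 : ℝ)).const_add p.1).pow 2).add_const (p.2 ^ 2)
    |>.add_const ε) (by simpa using hs)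
  simp only [HasLineDerivAt]
  refine (this.congr_deriv ?_).congr_of_eventuallyEq (.of_forall fun t => by simp)
  simp only [id_eq, add_zero, Pi.pow_apply]
  field_simp
  norm_num
  ring

/-- Exchanging the coordinates turns an `x`-derivative into a `y`-derivative, so derivatives of the
symmetric function `log (x² + y² + ε)` only need to be computed in `x`. -/
theorem HasLineDerivAt.swap_plane {g : ℝ × ℝ → ℝ} {d : ℝ} {p : ℝ × ℝ}
    (h : HasLineDerivAt ℝ g d p.swap (1, 0)) :
    HasLineDerivAt ℝ (fun q => g q.swap) d p (0, 1) := by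
  simpa [HasLineDerivAt] using h

theorem hasDerivAt_fst {F : ℝ × ℝ → ℝ} (hF : Differentiable ℝ F) (x y : ℝ) :
    HasDerivAt (fun t => F (t, y)) (fderiv ℝ F (x, y) (1, 0)) x :=
  (hF (x, y)).hasFDerivAt.comp_hasDerivAt x ((hasDerivAt_id x).prodMk (hasDerivAt_const x y))

theorem hasDerivAt_snd {F : ℝ × ℝ → ℝ} (hF : Differentiable ℝ F) (x y : ℝ) :
    HasDerivAt (fun t => F (x, t)) (fderiv ℝ F (x, y) (0, 1)) y :=
  (hF (x, y)).hasFDerivAt.comp_hasDerivAt y ((hasDerivAt_const y x).prodMk (hasDerivAt_id y))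

theorem iteratedDeriv_two_fst {f : ℝ × ℝ → ℝ} (hf : ContDiff ℝ (⊤ : ℕ∞) f) (p : ℝ × ℝ) :
    iteratedDeriv 2 (fun x => f (x, p.2)) p.1 =
      fderiv ℝ (fun q => fderiv ℝ f q (1, 0)) p (1, 0) := by
  have h1 : ContDiff ℝ (⊤ : ℕ∞) (fun q => fderiv ℝ f q (1, 0)) :=
    (hf.fderiv_right (by simp)).clm_apply contDiff_const
  rw [iteratedDeriv_succ, iteratedDeriv_one,
    funext fun x => (hasDerivAt_fst (hf.differentiable (by simp)) x p.2).deriv]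
  exact (hasDerivAt_fst (h1.differentiable (by simp)) p.1 p.2).deriv

theorem iteratedDeriv_two_snd {f : ℝ × ℝ → ℝ} (hf : ContDiff ℝ (⊤ : ℕ∞) f) (p : ℝ × ℝ) :
    iteratedDeriv 2 (fun y => f (p.1, y)) p.2 =
      fderiv ℝ (fun q => fderiv ℝ f q (0, 1)) p (0, 1) := by
  have h1 : ContDiff ℝ (⊤ : ℕ∞) (fun q => fderiv ℝ f q (0, 1)) :=
    (hf.fderiv_right (by simp)).clm_apply contDiff_const
  rw [iteratedDeriv_succ, iteratedDeriv_one,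
    funext fun x => (hasDerivAt_snd (hf.differentiable (by simp)) p.1 x).deriv]
  exact (hasDerivAt_snd (h1.differentiable (by simp)) p.1 p.2).deriv

theorem integral_kernel :
    ∫ p : ℝ × ℝ, (Real.pi)⁻¹ * ((1 + p.1 ^ 2 + p.2 ^ 2) ^ 2)⁻¹ = 1 := by
  rw [← integral_comp_polarCoord_symm]
  have h1 : ∀ p : ℝ × ℝ, p.1 • ((Real.pi)⁻¹ * ((1 + (polarCoord.symm p).1 ^ 2 +
      (polarCoord.symm p).2 ^ 2) ^ 2)⁻¹) = (p.1 * ((1 + p.1 ^ 2) ^ 2)⁻¹) * Real.pi⁻¹ := by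
    intro p
    have : 1 + (polarCoord.symm p).1 ^ 2 + (polarCoord.symm p).2 ^ 2 = 1 + p.1 ^ 2 := by
      simp only [polarCoord_symm_apply]
      linear_combination p.1 ^ 2 * Real.sin_sq_add_cos_sq p.2
    rw [this, smul_eq_mul]; ring
  simp_rw [h1, polarCoord_target]
  have hd : ∀ x ∈ Ici (0 : ℝ), HasDerivAt (fun r : ℝ => -(1 / 2) * (1 + r ^ 2)⁻¹)
      (x * ((1 + x ^ 2) ^ 2)⁻¹) x := by
    intro x _
    have := ((((hasDerivAt_id x).pow 2).const_add 1).inv (by simp; positivity)).const_mul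
      (-(1 / 2) : ℝ)
    refine this.congr_deriv ?_
    simp only [id_eq, Pi.pow_apply]
    field_simp
    norm_num
  have hl : Tendsto (fun r : ℝ => -(1 / 2) * (1 + r ^ 2)⁻¹) atTop (𝓝 (-(1 / 2) * 0)) :=
    (tendsto_inv_atTop_zero.comp (tendsto_atTop_add_const_left _ _
      (tendsto_pow_atTop two_ne_zero))).const_mul _
  have h2 : ∫ r in Ioi (0 : ℝ), r * ((1 + r ^ 2) ^ 2)⁻¹ = 1 / 2 := by
    rw [integral_Ioi_of_hasDerivAt_of_nonneg' hd
      (fun x hx => mul_nonneg (le_of_lt hx) (by positivity)) hl]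
    norm_num
  rw [Measure.volume_eq_prod, setIntegral_prod_mul (fun r : ℝ => r * ((1 + r ^ 2) ^ 2)⁻¹)
    (fun _ => Real.pi⁻¹), h2]
  have := Real.pi_pos
  simp
  rw [max_eq_left (by linarith)]
  field_simp; norm_num

/-- The rescalings `c² K(c p)` of `K(p) = π⁻¹ (1 + |p|²)⁻²` converge weakly to the Dirac mass at
the origin as `c → ∞`. -/
theorem tendsto_kernel {f : ℝ × ℝ → ℝ} (hf : Continuous f) (hc : HasCompactSupport f) :
    Tendsto (fun c : ℝ => ∫ p : ℝ × ℝ, (c ^ 2 * (Real.pi⁻¹ *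
      ((1 + (c * p.1) ^ 2 + (c * p.2) ^ 2) ^ 2)⁻¹)) * f p) atTop (𝓝 (f 0)) := by
  have hd : Module.finrank ℝ (ℝ × ℝ) = 2 := by simp
  have := tendsto_integral_comp_smul_smul_of_integrable (μ := volume)
    (φ := fun p : ℝ × ℝ => Real.pi⁻¹ * ((1 + p.1 ^ 2 + p.2 ^ 2) ^ 2)⁻¹)
    (fun p => by have := Real.pi_pos; positivity) integral_kernel ?_
    (hf.integrable_of_hasCompactSupport hc) hf.continuousAt
  · simpa [hd] using this
  · rw [hd]
    have hl : Tendsto (fun p : ℝ × ℝ => Real.pi⁻¹ * (1 + ‖p‖ ^ 2)⁻¹)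
        (Bornology.cobounded (ℝ × ℝ)) (𝓝 (Real.pi⁻¹ * 0)) :=
      (tendsto_inv_atTop_zero.comp (tendsto_atTop_add_const_left _ _
        ((tendsto_pow_atTop two_ne_zero).comp tendsto_norm_cobounded_atTop))).const_mul _
    rw [mul_zero] at hl
    have := Real.pi_pos
    refine squeeze_zero (fun p => by positivity) (fun p => ?_) hl
    -- `‖p‖` is the sup norm on `ℝ × ℝ`, which is below the Euclidean one.
    have hn : ‖p‖ ^ 2 ≤ p.1 ^ 2 + p.2 ^ 2 := by
      rw [Prod.norm_def]
      rcases max_choice ‖p.1‖ ‖p.2‖ with h | h <;> rw [h] <;>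
        simp only [Real.norm_eq_abs, sq_abs] <;> nlinarith [sq_nonneg p.1, sq_nonneg p.2]
    rw [mul_left_comm]
    gcongr
    rw [← div_eq_mul_inv, div_le_iff₀ (by positivity), inv_mul_eq_div, le_div_iff₀ (by positivity)]
    nlinarith [sq_nonneg ‖p‖]

/-- The Green identity for the regularised potential `log (x² + y² + ε)`, whose Laplacian is
`4ε / (x² + y² + ε)²`. The Laplacian of `f` is written through iterated Fréchet derivatives. -/
theorem integral_log_mul_laplacian {f : ℝ × ℝ → ℝ} (hf : ContDiff ℝ (⊤ : ℕ∞) f)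
    (hc : HasCompactSupport f) {ε : ℝ} (hε : 0 < ε) :
    ∫ p : ℝ × ℝ, Real.log (p.1 ^ 2 + p.2 ^ 2 + ε) *
      (fderiv ℝ (fun q => fderiv ℝ f q (1, 0)) p (1, 0) +
        fderiv ℝ (fun q => fderiv ℝ f q (0, 1)) p (0, 1)) =
    ∫ p : ℝ × ℝ, 4 * ε / (p.1 ^ 2 + p.2 ^ 2 + ε) ^ 2 * f p := by
  have hs : ∀ p : ℝ × ℝ, p.1 ^ 2 + p.2 ^ 2 + ε ≠ 0 := fun p => by positivity
  have hs2 : ∀ p : ℝ × ℝ, (p.1 ^ 2 + p.2 ^ 2 + ε) ^ 2 ≠ 0 := fun p => pow_ne_zero _ (hs p)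
  have cs : Continuous fun p : ℝ × ℝ => p.1 ^ 2 + p.2 ^ 2 + ε := by fun_prop
  have d1 : ∀ v : ℝ × ℝ, ContDiff ℝ (⊤ : ℕ∞) (fun q => fderiv ℝ f q v) := fun v =>
    (hf.fderiv_right (by simp)).clm_apply contDiff_const
  have d2 : ∀ v : ℝ × ℝ, Continuous (fun p => fderiv ℝ (fun q => fderiv ℝ f q v) p v) :=
    fun v => ((d1 v).continuous_fderiv (by simp)).clm_apply continuous_const
  have c2 : ∀ v : ℝ × ℝ, HasCompactSupport (fun p => fderiv ℝ (fun q => fderiv ℝ f q v) p v) :=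
    fun v => (hc.fderiv_apply (𝕜 := ℝ) v).fderiv_apply (𝕜 := ℝ) v
  have cu : Continuous fun p : ℝ × ℝ => Real.log (p.1 ^ 2 + p.2 ^ 2 + ε) := cs.log hs
  have cux : Continuous fun p : ℝ × ℝ => 2 * p.1 / (p.1 ^ 2 + p.2 ^ 2 + ε) :=
    (by fun_prop : Continuous fun p : ℝ × ℝ => 2 * p.1).div cs hs
  have cuxx : Continuous fun p : ℝ × ℝ => 2 / (p.1 ^ 2 + p.2 ^ 2 + ε) -
      4 * p.1 ^ 2 / (p.1 ^ 2 + p.2 ^ 2 + ε) ^ 2 :=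
    (continuous_const.div cs hs).sub
      ((by fun_prop : Continuous fun p : ℝ × ℝ => 4 * p.1 ^ 2).div (cs.pow 2) hs2)
  have dl : ∀ {g : ℝ × ℝ → ℝ}, ContDiff ℝ (⊤ : ℕ∞) g → ∀ v p : ℝ × ℝ,
      HasLineDerivAt ℝ g (fderiv ℝ g p v) p v := fun hg v p =>
    (hg.differentiable (by simp) p).hasFDerivAt.hasLineDerivAt v
  have hx := ibp_twice cu cux cuxx hf.continuous (d1 (1, 0)).continuous (d2 (1, 0)) hc
    (hc.fderiv_apply (𝕜 := ℝ) (1, 0)) (c2 (1, 0))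
    (hasLineDerivAt_log_fst hε) (hasLineDerivAt_log_fst_fst hε)
    (dl hf (1, 0)) (dl (d1 (1, 0)) (1, 0))
  have cuyy : Continuous fun p : ℝ × ℝ => 2 / (p.2 ^ 2 + p.1 ^ 2 + ε) -
      4 * p.2 ^ 2 / (p.2 ^ 2 + p.1 ^ 2 + ε) ^ 2 := cuxx.comp continuous_swap
  have hy := ibp_twice (cu.comp continuous_swap) (cux.comp continuous_swap) cuyy
    hf.continuous (d1 (0, 1)).continuous (d2 (0, 1)) hc
    (hc.fderiv_apply (𝕜 := ℝ) (0, 1)) (c2 (0, 1))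
    (fun p => (hasLineDerivAt_log_fst hε p.swap).swap_plane)
    (fun p => (hasLineDerivAt_log_fst_fst hε p.swap).swap_plane)
    (dl hf (0, 1)) (dl (d1 (0, 1)) (0, 1))
  have key : ∀ {a b : ℝ × ℝ → ℝ}, Continuous a → Continuous b → HasCompactSupport b →
      Integrable (fun p => a p * b p) := fun ha hb cb =>
    (ha.mul hb).integrable_of_hasCompactSupport cb.mul_left
  have e : ∀ p : ℝ × ℝ, p.2 ^ 2 + p.1 ^ 2 = p.1 ^ 2 + p.2 ^ 2 := fun p => add_comm _ _
  simp only [Function.comp_apply, Prod.fst_swap, Prod.snd_swap, e] at hy cuyy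
  simp only [mul_add]
  rw [integral_add (key cu (d2 _) (c2 _)) (key cu (d2 _) (c2 _)), hx, hy,
    ← integral_add (key cuxx hf.continuous hc) (key cuyy hf.continuous hc)]
  refine integral_congr_ae (.of_forall fun p => ?_)
  have := hs p
  simp only
  field_simp
  ring

theorem locallyIntegrable_log_fst : LocallyIntegrable (fun p : ℝ × ℝ => Real.log p.1) := by
  rw [locallyIntegrable_iff]
  intro K hK
  obtain ⟨R, hR⟩ := hK.isBounded.subset_closedBall 0
  have h1 : IntegrableOn Real.log (Icc (-R) R) := by
    by_cases h : -R ≤ R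
    · exact (intervalIntegrable_iff_integrableOn_Icc_of_le h).1
        intervalIntegral.intervalIntegrable_log'
    · simp [Icc_eq_empty h]
  have h2 : IntegrableOn (fun _ : ℝ => (1 : ℝ)) (Icc (-R) R) := by simp
  have h3 := Integrable.mul_prod h1 h2
  simp only [mul_one, Measure.prod_restrict] at h3
  refine IntegrableOn.mono_set h3 (hR.trans ?_)
  intro p hp
  have hp : ‖p‖ ≤ R := by simpa using hp
  exact ⟨abs_le.1 ((norm_fst_le p).trans hp), abs_le.1 ((norm_snd_le p).trans hp)⟩

/-- The lower bound on the logarithm comes from `x² ≤ x² + y² + ε`, the upper one from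
`log t ≤ t - 1`. The bound is uniform in `ε`, as dominated convergence requires. -/
theorem abs_log_add_le {x y ε : ℝ} (hx : x ≠ 0) (h0 : 0 ≤ ε) (h1 : ε ≤ 1) :
    |Real.log (x ^ 2 + y ^ 2 + ε)| ≤ 2 * |Real.log x| + (x ^ 2 + y ^ 2) := by
  have hx2 : 0 < x ^ 2 := by positivity
  have hl : Real.log (x ^ 2) ≤ Real.log (x ^ 2 + y ^ 2 + ε) :=
    Real.log_le_log hx2 (by nlinarith [sq_nonneg y])
  rw [Real.log_pow] at hl
  push_cast at hl
  have hu : Real.log (x ^ 2 + y ^ 2 + ε) ≤ x ^ 2 + y ^ 2 + ε - 1 :=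
    Real.log_le_sub_one_of_pos (by positivity)
  rw [abs_le]
  constructor <;> nlinarith [neg_abs_le (Real.log x), abs_nonneg (Real.log x), sq_nonneg y]

/-- The fundamental solution `φ(x) = (2π)⁻¹ log‖x‖` of the 2D Laplacian satisfies
`∫ φ Δf = f(0)` for every smooth compactly supported `f`. -/
theorem stmt_5 (f : ℝ × ℝ → ℝ) (hf : ContDiff ℝ (⊤ : ℕ∞) f) (hsupp : HasCompactSupport f)
    (phi : ℝ × ℝ → ℝ)
    (hphi : ∀ p : ℝ × ℝ, p ≠ 0 →
      phi p = (2 * Real.pi)⁻¹ * Real.log (Real.sqrt (p.1 ^ 2 + p.2 ^ 2)))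
    (lapf : ℝ × ℝ → ℝ)
    (hlapf : ∀ p : ℝ × ℝ, lapf p = iteratedDeriv 2 (fun x => f (x, p.2)) p.1 +
      iteratedDeriv 2 (fun y => f (p.1, y)) p.2) :
    Integrable (fun p : ℝ × ℝ => phi p * lapf p) ∧
    (∫ p : ℝ × ℝ, phi p * lapf p) = f 0 := by
  have hlap : lapf = fun p => fderiv ℝ (fun q => fderiv ℝ f q (1, 0)) p (1, 0) +
      fderiv ℝ (fun q => fderiv ℝ f q (0, 1)) p (0, 1) := by
    ext p
    rw [hlapf, iteratedDeriv_two_fst hf, iteratedDeriv_two_snd hf]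
  have d1 : ∀ v : ℝ × ℝ, ContDiff ℝ (⊤ : ℕ∞) (fun q => fderiv ℝ f q v) := fun v =>
    (hf.fderiv_right (by simp)).clm_apply contDiff_const
  have hcont : Continuous lapf := by
    rw [hlap]
    exact (((d1 _).continuous_fderiv (by simp)).clm_apply continuous_const).add
      (((d1 _).continuous_fderiv (by simp)).clm_apply continuous_const)
  have hcs : HasCompactSupport lapf := by
    rw [hlap]
    exact ((hsupp.fderiv_apply (𝕜 := ℝ) _).fderiv_apply (𝕜 := ℝ) _).add
      ((hsupp.fderiv_apply (𝕜 := ℝ) _).fderiv_apply (𝕜 := ℝ) _)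
  -- The bound on the logarithm needs `p.1 ≠ 0`, which also excludes the origin, where `phi` is
  -- unspecified.
  have hae : ∀ᵐ p : ℝ × ℝ, p.1 ≠ 0 :=
    Measure.quasiMeasurePreserving_fst.ae (Measure.ae_ne volume (0 : ℝ))
  have hdom : Integrable (fun p : ℝ × ℝ =>
      (2 * |Real.log p.1| + (p.1 ^ 2 + p.2 ^ 2)) * ‖lapf p‖) := by
    have hloc : LocallyIntegrable (fun p : ℝ × ℝ =>
        2 * |Real.log p.1| + (p.1 ^ 2 + p.2 ^ 2)) := by
      refine LocallyIntegrable.add ?_ (Continuous.locallyIntegrable (by fun_prop))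
      exact fun p => ((locallyIntegrable_log_fst p).norm.smul (2 : ℝ))
    simpa [mul_comm] using
      hloc.integrable_smul_left_of_hasCompactSupport hcont.norm hcs.norm
  have hphi' : ∀ᵐ p : ℝ × ℝ, (4 * Real.pi)⁻¹ * (Real.log (p.1 ^ 2 + p.2 ^ 2) * lapf p) =
      phi p * lapf p := by
    filter_upwards [hae] with p hp
    rw [hphi p (fun h => hp (by simp [h])), Real.log_sqrt (by positivity)]
    field_simp
    ring
  have hint : Integrable (fun p : ℝ × ℝ => Real.log (p.1 ^ 2 + p.2 ^ 2) * lapf p) := by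
    refine hdom.mono' ?_ ?_
    · exact (Measurable.aestronglyMeasurable (by fun_prop)).mul hcont.aestronglyMeasurable
    · filter_upwards [hae] with p hp
      rw [norm_mul]
      gcongr
      simpa using abs_log_add_le (y := p.2) hp le_rfl zero_le_one
  refine ⟨(hint.const_mul _).congr hphi', ?_⟩
  rw [← integral_congr_ae hphi', integral_const_mul]
  have hlim : Tendsto (fun c : ℝ => ∫ p : ℝ × ℝ,
      Real.log (p.1 ^ 2 + p.2 ^ 2 + (c⁻¹) ^ 2) * lapf p) atTop
      (𝓝 (∫ p : ℝ × ℝ, Real.log (p.1 ^ 2 + p.2 ^ 2) * lapf p)) := by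
    refine tendsto_integral_filter_of_dominated_convergence _ ?_ ?_ hdom ?_
    · exact .of_forall fun c =>
        (Measurable.aestronglyMeasurable (by fun_prop)).mul hcont.aestronglyMeasurable
    · filter_upwards [eventually_ge_atTop (1 : ℝ)] with c hc
      filter_upwards [hae] with p hp
      rw [norm_mul]
      gcongr
      exact abs_log_add_le hp (by positivity)
        (pow_le_one₀ (by positivity) (inv_le_one_of_one_le₀ hc))
    · filter_upwards [hae] with p hp
      have h0 : Tendsto (fun c : ℝ => p.1 ^ 2 + p.2 ^ 2 + (c⁻¹) ^ 2) atTop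
          (𝓝 (p.1 ^ 2 + p.2 ^ 2)) := by
        simpa using (tendsto_inv_atTop_zero.pow 2).const_add (p.1 ^ 2 + p.2 ^ 2)
      exact (h0.log (by positivity)).mul_const _
  have hlim' := (tendsto_kernel hf.continuous hsupp).const_mul (4 * Real.pi)
  have heq : (fun c : ℝ => ∫ p : ℝ × ℝ,
      Real.log (p.1 ^ 2 + p.2 ^ 2 + (c⁻¹) ^ 2) * lapf p) =ᶠ[atTop] fun c : ℝ =>
      4 * Real.pi * ∫ p : ℝ × ℝ, (c ^ 2 * (Real.pi⁻¹ *
      ((1 + (c * p.1) ^ 2 + (c * p.2) ^ 2) ^ 2)⁻¹)) * f p := by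
    filter_upwards [eventually_gt_atTop (0 : ℝ)] with c hc
    rw [hlap, integral_log_mul_laplacian hf hsupp (by positivity), ← integral_const_mul]
    refine integral_congr_ae (.of_forall fun p => ?_)
    have : p.1 ^ 2 + p.2 ^ 2 + (c⁻¹) ^ 2 = (1 + (c * p.1) ^ 2 + (c * p.2) ^ 2) / c ^ 2 := by
      field_simp
      ring
    simp only [this]
    field_simp
  rw [tendsto_nhds_unique (hlim.congr' heq) hlim']
  field_simp
end

section
/- Let g : ℝ² → ℂ be a Schwartz function with Fourier transform ĝ. Define, for (x,y) ∈ ℝ², v(x,y) = (2π)⁻² ∫_{ℝ²} e^{i(xξ+yη)} (−iη/(ξ²+η²)) ĝ(ξ,η) d(ξ,η) and w(x,y) = (2π)⁻² ∫_{ℝ²} e^{i(xξ+yη)} (iξ/(ξ²+η²)) ĝ(ξ,η) d(ξ,η), where the integrands are extended by 0 at (ξ,η) = (0,0). Then both integrals converge absolutely, v and w are continuously differentiable on ℝ², and they satisfy ∂ₓv + ∂ᵧw = 0 and ∂ᵧv − ∂ₓw = g on ℝ². -/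
/-!
In Fourier space the two equations are the identities `iξ·(-iη) + iη·(iξ) = 0` and
`iη·(-iη) - iξ·(iξ) = ξ² + η²`; everything else is integrability. The multipliers are bounded by
`1/‖p‖`, which is integrable at the origin of the plane (`integrable_inv_norm_mul`), and `ĝ` is
Schwartz (`exists_schwartz_fourier`). So `v̂` and `ŵ`, as well as their products with `‖p‖`, are
integrable (`integrable_multiplier_mul`), which permits one differentiation under the integral
sign (`contDiff_planeSynthesis`, `fderiv_planeSynthesis_apply`). The symbol of `∂ᵧv - ∂ₓw` is then
`ĝ` almost everywhere, and Fourier inversion gives `g`.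
-/

open MeasureTheory

/-- The inverse Fourier integral `∫ e^{i(xξ+yη)} f(ξ,η) d(ξ,η)` over the plane, without its
normalising factor, as a function of the pair `(x, y)`. -/
noncomputable def planeSynthesis (f : ℝ × ℝ → ℂ) (z : ℝ × ℝ) : ℂ :=
  ∫ p : ℝ × ℝ, Complex.exp (Complex.I * ((z.1 * p.1 + z.2 * p.2 : ℝ) : ℂ)) * f p

/-- The bilinear form `(p, z) ↦ -(p₁z₁ + p₂z₂)/(2π)`, scaled so that Mathlib's kernel
`𝐞 (-L p z) = e^{-2πi L p z}` becomes `e^{i(p₁z₁ + p₂z₂)}`. -/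
noncomputable def planePairing : (ℝ × ℝ) →L[ℝ] (ℝ × ℝ) →L[ℝ] ℝ :=
  (-(2 * Real.pi)⁻¹) •
    ((ContinuousLinearMap.fst ℝ ℝ ℝ).smulRight (ContinuousLinearMap.fst ℝ ℝ ℝ) +
      (ContinuousLinearMap.snd ℝ ℝ ℝ).smulRight (ContinuousLinearMap.snd ℝ ℝ ℝ))

lemma planePairing_apply (p z : ℝ × ℝ) :
    planePairing p z = -(2 * Real.pi)⁻¹ * (p.1 * z.1 + p.2 * z.2) := by
  simp [planePairing]
  ring

lemma fourierChar_planePairing (p z : ℝ × ℝ) :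
    (Real.fourierChar (-planePairing p z) : ℂ) =
      Complex.exp (Complex.I * ((z.1 * p.1 + z.2 * p.2 : ℝ) : ℂ)) := by
  rw [Real.fourierChar_apply, planePairing_apply]
  congr 1
  have h : 2 * Real.pi * -(-(2 * Real.pi)⁻¹ * (p.1 * z.1 + p.2 * z.2)) =
      z.1 * p.1 + z.2 * p.2 := by
    have := Real.pi_ne_zero
    field_simp
  rw [h, mul_comm]

lemma planeSynthesis_eq_fourierIntegral (f : ℝ × ℝ → ℂ) :
    planeSynthesis f =
      VectorFourier.fourierIntegral Real.fourierChar volume planePairing.toLinearMap₁₂ f := by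
  ext z
  simp only [planeSynthesis, VectorFourier.fourierIntegral]
  refine integral_congr_ae (Filter.Eventually.of_forall fun p => ?_)
  change _ = Real.fourierChar (-planePairing p z) • f p
  rw [Circle.smul_def, fourierChar_planePairing, smul_eq_mul]

lemma integrable_planeKernel_mul {f : ℝ × ℝ → ℂ} (hf : Integrable f) (z : ℝ × ℝ) :
    Integrable fun p : ℝ × ℝ =>
      Complex.exp (Complex.I * ((z.1 * p.1 + z.2 * p.2 : ℝ) : ℂ)) * f p := by
  refine hf.bdd_mul (c := 1) (by fun_prop) (Filter.Eventually.of_forall fun p => ?_)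
  rw [mul_comm, Complex.norm_exp_ofReal_mul_I]

lemma contDiff_planeSynthesis {f : ℝ × ℝ → ℂ} (hf : Integrable f)
    (hf' : Integrable fun p => ‖p‖ * ‖f p‖) : ContDiff ℝ 1 (planeSynthesis f) := by
  rw [planeSynthesis_eq_fourierIntegral]
  refine VectorFourier.contDiff_fourierIntegral (N := 1) planePairing fun n hn => ?_
  have hn' : n ≤ 1 := by exact_mod_cast hn
  interval_cases n
  · simpa using hf.norm
  · simpa using hf'

/-- Differentiating under the integral sign: a derivative of the synthesis in direction `u`
multiplies the density by `i(u₁ξ + u₂η)`. -/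
lemma fderiv_planeSynthesis_apply {f : ℝ × ℝ → ℂ} (hf : Integrable f)
    (hf' : Integrable fun p => ‖p‖ * ‖f p‖) (z u : ℝ × ℝ) :
    fderiv ℝ (planeSynthesis f) z u = planeSynthesis
      (fun p => Complex.I * ((u.1 * p.1 + u.2 * p.2 : ℝ) : ℂ) * f p) z := by
  rw [planeSynthesis_eq_fourierIntegral,
    (VectorFourier.hasFDerivAt_fourierIntegral planePairing hf hf' z).fderiv]
  have hint : Integrable (fun p : ℝ × ℝ => Real.fourierChar (-planePairing p z) •
      VectorFourier.fourierSMulRight planePairing f p) := by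
    refine (VectorFourier.fourierIntegral_convergent_iff (L := planePairing.toLinearMap₁₂)
      (μ := volume) Real.continuous_fourierChar (by apply planePairing.continuous₂) z).2 ?_
    refine (hf'.const_mul (2 * Real.pi * ‖planePairing‖)).mono'
      (hf.aestronglyMeasurable.fourierSMulRight (L := planePairing))
      (Filter.Eventually.of_forall fun p => ?_)
    exact (VectorFourier.norm_fourierSMulRight_le planePairing f p).trans_eq (by ring)
  simp only [VectorFourier.fourierIntegral, planeSynthesis]
  change (∫ p : ℝ × ℝ, Real.fourierChar (-planePairing p z) •
      VectorFourier.fourierSMulRight planePairing f p) u = _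
  rw [ContinuousLinearMap.integral_apply hint]
  refine integral_congr_ae (Filter.Eventually.of_forall fun p => ?_)
  change Real.fourierChar (-planePairing p z) •
      VectorFourier.fourierSMulRight planePairing f p u = _
  rw [Circle.smul_def, fourierChar_planePairing, VectorFourier.fourierSMulRight_apply,
    planePairing_apply]
  have := Real.pi_ne_zero
  simp only [smul_eq_mul, Complex.real_smul]
  push_cast
  field_simp

lemma deriv_planeSynthesis_fst {f : ℝ × ℝ → ℂ} (hf : Integrable f)
    (hf' : Integrable fun p => ‖p‖ * ‖f p‖) (x y : ℝ) :
    deriv (fun x' => planeSynthesis f (x', y)) x =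
      planeSynthesis (fun p => Complex.I * (p.1 : ℂ) * f p) (x, y) := by
  have hd := ((contDiff_planeSynthesis hf hf').differentiable one_ne_zero (x, y)).hasFDerivAt
  have hc : HasDerivAt (fun x' : ℝ => (x', y)) ((1 : ℝ), (0 : ℝ)) x :=
    (hasDerivAt_id x).prodMk (hasDerivAt_const x y)
  have h := (hd.comp_hasDerivAt x hc).deriv
  rw [fderiv_planeSynthesis_apply hf hf'] at h
  simpa [Function.comp_def] using h

lemma deriv_planeSynthesis_snd {f : ℝ × ℝ → ℂ} (hf : Integrable f)
    (hf' : Integrable fun p => ‖p‖ * ‖f p‖) (x y : ℝ) :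
    deriv (fun y' => planeSynthesis f (x, y')) y =
      planeSynthesis (fun p => Complex.I * (p.2 : ℂ) * f p) (x, y) := by
  have hd := ((contDiff_planeSynthesis hf hf').differentiable one_ne_zero (x, y)).hasFDerivAt
  have hc : HasDerivAt (fun y' : ℝ => (x, y')) ((0 : ℝ), (1 : ℝ)) y :=
    (hasDerivAt_const y x).prodMk (hasDerivAt_id y)
  have h := (hd.comp_hasDerivAt y hc).deriv
  rw [fderiv_planeSynthesis_apply hf hf'] at h
  simpa [Function.comp_def] using h

/-- In two dimensions `1/‖p‖` is integrable near the origin: the radial Jacobian `r` cancels the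
singularity. -/
lemma integrable_inv_norm_mul :
    Integrable fun p : ℝ × ℝ => ‖p‖⁻¹ * (‖p‖ + 1) ^ (-2 : ℝ) := by
  refine (integrable_fun_norm_addHaar (volume : Measure (ℝ × ℝ))
    (f := fun r : ℝ => r⁻¹ * (r + 1) ^ (-2 : ℝ))).2 ?_
  refine (integrableOn_add_rpow_Ioi_of_lt (a := -2) (m := 1) (c := 0)
    (by norm_num) (by norm_num)).congr_fun (fun r hr => ?_) measurableSet_Ioi
  have hr' : r ≠ 0 := (Set.mem_Ioi.1 hr).ne'
  simp [Module.finrank_prod, hr']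

/-- A Fourier multiplier bounded by `1/‖p‖` turns a Schwartz function into an integrable density
whose first absolute moment is finite. -/
lemma integrable_multiplier_mul (h : SchwartzMap (ℝ × ℝ) ℂ) {m : ℝ × ℝ → ℂ} (hm : Measurable m)
    (hb : ∀ p, ‖m p‖ ≤ ‖p‖⁻¹) :
    Integrable (fun p => m p * h p) ∧ Integrable (fun p => ‖p‖ * ‖m p * h p‖) := by
  have hmeas : AEStronglyMeasurable (fun p => m p * h p) volume :=
    hm.aestronglyMeasurable.mul h.continuous.aestronglyMeasurable
  constructor
  · obtain ⟨C, hC⟩ : ∃ C : ℝ, ∀ p : ℝ × ℝ, (1 + ‖p‖) ^ 2 * ‖h p‖ ≤ C := by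
      refine ⟨2 ^ 2 * (Finset.Iic (2, 0)).sup
        (fun m : ℕ × ℕ => SchwartzMap.seminorm ℝ m.1 m.2) h, fun p => ?_⟩
      simpa only [norm_iteratedFDeriv_zero] using
        SchwartzMap.one_add_le_sup_seminorm_apply (𝕜 := ℝ) (m := (2, 0)) (k := 2) (n := 0) le_rfl le_rfl h p
    refine (integrable_inv_norm_mul.const_mul C).mono' hmeas
      (Filter.Eventually.of_forall fun p => ?_)
    have hpos : 0 < ‖p‖ + 1 := by positivity
    have h1 : ‖h p‖ ≤ C * (‖p‖ + 1) ^ (-2 : ℝ) := by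
      rw [Real.rpow_neg hpos.le, Real.rpow_two, ← div_eq_mul_inv, le_div_iff₀ (by positivity)]
      have := hC p
      rw [add_comm 1] at this
      linarith
    calc ‖m p * h p‖ = ‖m p‖ * ‖h p‖ := norm_mul _ _
      _ ≤ ‖p‖⁻¹ * (C * (‖p‖ + 1) ^ (-2 : ℝ)) := by
        gcongr
        exact hb p
      _ = _ := by ring
  · refine h.integrable.norm.mono' (continuous_norm.aestronglyMeasurable.mul hmeas.norm)
      (Filter.Eventually.of_forall fun p => ?_)
    rw [norm_mul, norm_norm, norm_norm, norm_mul, ← mul_assoc]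
    refine mul_le_of_le_one_left (norm_nonneg _) ?_
    calc ‖p‖ * ‖m p‖ ≤ ‖p‖ * ‖p‖⁻¹ := by gcongr; exact hb p
      _ ≤ 1 := mul_inv_le_one

lemma norm_sq_le_sq_add_sq (p : ℝ × ℝ) : ‖p‖ ^ 2 ≤ p.1 ^ 2 + p.2 ^ 2 := by
  rcases max_cases ‖p.1‖ ‖p.2‖ with ⟨h, -⟩ | ⟨h, -⟩ <;>
    rw [Prod.norm_def, h, Real.norm_eq_abs, sq_abs] <;> nlinarith [sq_nonneg p.1, sq_nonneg p.2]

/-- A coordinate divided by `ξ² + η²` is dominated by the inverse of the sup norm. -/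
lemma abs_div_le_inv_norm (p : ℝ × ℝ) {a : ℝ} (ha : |a| ≤ ‖p‖) :
    |a| / (p.1 ^ 2 + p.2 ^ 2) ≤ ‖p‖⁻¹ := by
  rcases eq_or_ne p 0 with rfl | hp
  · simp
  have hpos : 0 < ‖p‖ := norm_pos_iff.2 hp
  have h2 := norm_sq_le_sq_add_sq p
  calc |a| / (p.1 ^ 2 + p.2 ^ 2) ≤ ‖p‖ / ‖p‖ ^ 2 := by gcongr
    _ = ‖p‖⁻¹ := by field_simp

open FourierTransform in
/-- The transform of a Schwartz function on the plane is a Schwartz function, and Fourier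
inversion holds in the convention with factor `(2π)⁻²` on the inverse. -/
lemma exists_schwartz_fourier (g : SchwartzMap (ℝ × ℝ) ℂ) (ghat : ℝ × ℝ → ℂ)
    (hghat : ∀ p : ℝ × ℝ, ghat p =
      ∫ q : ℝ × ℝ, Complex.exp (-(Complex.I * ((q.1 * p.1 + q.2 * p.2 : ℝ) : ℂ))) * g q) :
    ∃ h : SchwartzMap (ℝ × ℝ) ℂ, ghat = h ∧
      ∀ z, g z = (((2 * Real.pi) ^ 2 : ℝ) : ℂ)⁻¹ * planeSynthesis h z := by
  -- `ℂ` serves as the Euclidean model of the plane: `ℝ × ℝ` carries the sup norm and has no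
  -- inner product.
  let e : ℂ ≃L[ℝ] ℝ × ℝ := Complex.equivRealProdCLM
  let G : SchwartzMap ℂ ℂ := SchwartzMap.compCLMOfContinuousLinearEquiv ℂ e g
  have h2pi : (2 * Real.pi) ≠ 0 := by positivity
  let s : (ℝ × ℝ) ≃L[ℝ] (ℝ × ℝ) :=
    ContinuousLinearEquiv.smulLeft (Units.mk0 (2 * Real.pi)⁻¹ (inv_ne_zero h2pi))
  let h : SchwartzMap (ℝ × ℝ) ℂ :=
    SchwartzMap.compCLMOfContinuousLinearEquiv ℂ (s.trans e.symm) (𝓕 G)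
  have hmp := Complex.volume_preserving_equiv_real_prod.symm
  have hh (p : ℝ × ℝ) : h p = (𝓕 (G : ℂ → ℂ)) (e.symm ((2 * Real.pi)⁻¹ • p)) := rfl
  have hinner (p q : ℝ × ℝ) : inner ℝ (e.symm p) (e.symm q) = p.1 * q.1 + p.2 * q.2 := by
    rw [Complex.inner]
    change ((⟨q.1, q.2⟩ : ℂ) * starRingEnd ℂ ⟨p.1, p.2⟩).re = _
    simp [mul_comm]
  refine ⟨h, ?_, ?_⟩
  · ext p
    rw [hghat, hh, Real.fourier_eq',
      ← hmp.integral_comp Complex.measurableEquivRealProd.symm.measurableEmbedding]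
    refine integral_congr_ae (Filter.Eventually.of_forall fun q => ?_)
    change _ = Complex.exp (((-2 * Real.pi *
      inner ℝ (e.symm q) (e.symm ((2 * Real.pi)⁻¹ • p)) : ℝ) : ℂ) * Complex.I) • g q
    rw [hinner, smul_eq_mul]
    have : -2 * Real.pi * (q.1 * ((2 * Real.pi)⁻¹ • p).1 + q.2 * ((2 * Real.pi)⁻¹ • p).2) =
        -(q.1 * p.1 + q.2 * p.2) := by
      simp only [Prod.smul_fst, Prod.smul_snd, smul_eq_mul]
      field_simp
    rw [this, Complex.ofReal_neg, neg_mul, mul_comm _ Complex.I]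
  · intro z
    have hinv : 𝓕⁻ (𝓕 (G : ℂ → ℂ)) (e.symm z) = g z := by
      rw [G.continuous.fourierInv_fourier_eq G.integrable (𝓕 G).integrable]
      change g (e (e.symm z)) = g z
      simp
    rw [← hinv, Real.fourierInv_eq',
      ← hmp.integral_comp Complex.measurableEquivRealProd.symm.measurableEmbedding]
    let K : ℝ × ℝ → ℂ := fun q =>
      Complex.exp (((2 * Real.pi * inner ℝ (e.symm q) (e.symm z) : ℝ) : ℂ) * Complex.I) •
        (𝓕 (G : ℂ → ℂ)) (e.symm q)
    have hK := Measure.integral_comp_smul (volume : Measure (ℝ × ℝ)) K (2 * Real.pi)⁻¹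
    have hL : planeSynthesis h z = ∫ p, K ((2 * Real.pi)⁻¹ • p) := by
      refine integral_congr_ae (Filter.Eventually.of_forall fun q => ?_)
      simp only [K, hinner, hh, smul_eq_mul]
      congr 2
      have : 2 * Real.pi * (((2 * Real.pi)⁻¹ • q).1 * z.1 + ((2 * Real.pi)⁻¹ • q).2 * z.2) =
          z.1 * q.1 + z.2 * q.2 := by
        simp only [Prod.smul_fst, Prod.smul_snd, smul_eq_mul]
        field_simp
      rw [this, mul_comm]
    rw [hL, hK]
    change ∫ p, K p = _
    have hfin : Module.finrank ℝ (ℝ × ℝ) = 2 := by simp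
    rw [hfin, inv_pow, inv_inv, abs_of_pos (by positivity), Complex.real_smul,
      inv_mul_cancel_left₀]
    exact_mod_cast pow_ne_zero 2 h2pi

/-- The Fourier-space Helmholtz source potentials `v̂ = −iη ĝ/(ξ²+η²)`,
`ŵ = iξ ĝ/(ξ²+η²)` define C¹ functions `v`, `w` with `∂ₓv + ∂ᵧw = 0` and
`∂ᵧv − ∂ₓw = g`. -/
theorem stmt_7 (g : SchwartzMap (ℝ × ℝ) ℂ)
    (ghat : ℝ × ℝ → ℂ)
    (hghat : ∀ p : ℝ × ℝ, ghat p =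
      ∫ q : ℝ × ℝ, Complex.exp (-(Complex.I * ((q.1 * p.1 + q.2 * p.2 : ℝ) : ℂ))) * g q)
    (v w : ℝ × ℝ → ℂ)
    (hv : ∀ x y : ℝ, v (x, y) = (((2 * Real.pi) ^ 2 : ℝ) : ℂ)⁻¹ *
      ∫ p : ℝ × ℝ, if p = 0 then 0 else
        Complex.exp (Complex.I * ((x * p.1 + y * p.2 : ℝ) : ℂ)) *
          (-(Complex.I) * ((p.2 : ℝ) : ℂ) / (((p.1 ^ 2 + p.2 ^ 2 : ℝ)) : ℂ)) * ghat p)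
    (hw : ∀ x y : ℝ, w (x, y) = (((2 * Real.pi) ^ 2 : ℝ) : ℂ)⁻¹ *
      ∫ p : ℝ × ℝ, if p = 0 then 0 else
        Complex.exp (Complex.I * ((x * p.1 + y * p.2 : ℝ) : ℂ)) *
          (Complex.I * ((p.1 : ℝ) : ℂ) / (((p.1 ^ 2 + p.2 ^ 2 : ℝ)) : ℂ)) * ghat p) :
    (∀ x y : ℝ, Integrable (fun p : ℝ × ℝ => if p = 0 then 0 else
        Complex.exp (Complex.I * ((x * p.1 + y * p.2 : ℝ) : ℂ)) *
          (-(Complex.I) * ((p.2 : ℝ) : ℂ) / (((p.1 ^ 2 + p.2 ^ 2 : ℝ)) : ℂ)) * ghat p)) ∧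
    (∀ x y : ℝ, Integrable (fun p : ℝ × ℝ => if p = 0 then 0 else
        Complex.exp (Complex.I * ((x * p.1 + y * p.2 : ℝ) : ℂ)) *
          (Complex.I * ((p.1 : ℝ) : ℂ) / (((p.1 ^ 2 + p.2 ^ 2 : ℝ)) : ℂ)) * ghat p)) ∧
    ContDiff ℝ 1 v ∧ ContDiff ℝ 1 w ∧
    (∀ x y : ℝ, deriv (fun x' => v (x', y)) x + deriv (fun y' => w (x, y')) y = 0) ∧
    (∀ x y : ℝ, deriv (fun y' => v (x, y')) y - deriv (fun x' => w (x', y)) x = g (x, y)) := by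
  obtain ⟨h, rfl, hinv⟩ := exists_schwartz_fourier g ghat hghat
  -- The case distinction at the origin is vacuous: there the quotient is `0 / 0 = 0`.
  have key (m : ℝ × ℝ → ℂ) (h0 : m 0 = 0) (x y : ℝ) :
      (fun p : ℝ × ℝ => if p = 0 then 0 else
        Complex.exp (Complex.I * ((x * p.1 + y * p.2 : ℝ) : ℂ)) * m p * h p) =
      fun p => Complex.exp (Complex.I * ((x * p.1 + y * p.2 : ℝ) : ℂ)) * (m p * h p) := by
    ext p
    split_ifs with hp
    · simp [hp, h0]
    · ring
  set mv : ℝ × ℝ → ℂ := fun p =>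
    -(Complex.I) * ((p.2 : ℝ) : ℂ) / (((p.1 ^ 2 + p.2 ^ 2 : ℝ)) : ℂ) with hmv
  set mw : ℝ × ℝ → ℂ := fun p =>
    Complex.I * ((p.1 : ℝ) : ℂ) / (((p.1 ^ 2 + p.2 ^ 2 : ℝ)) : ℂ) with hmw
  have hnn (p : ℝ × ℝ) : |p.1 ^ 2 + p.2 ^ 2| = p.1 ^ 2 + p.2 ^ 2 := abs_of_nonneg (by positivity)
  have keyv := key mv (by simp [hmv])
  have keyw := key mw (by simp [hmw])
  obtain ⟨hv1, hv2⟩ := integrable_multiplier_mul h (m := mv) (by fun_prop) fun p => by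
    simpa only [hmv, norm_div, norm_mul, norm_neg, Complex.norm_I, one_mul, Complex.norm_real,
      Real.norm_eq_abs, hnn] using abs_div_le_inv_norm p (norm_snd_le p)
  obtain ⟨hw1, hw2⟩ := integrable_multiplier_mul h (m := mw) (by fun_prop) fun p => by
    simpa only [hmw, norm_div, norm_mul, norm_neg, Complex.norm_I, one_mul, Complex.norm_real,
      Real.norm_eq_abs, hnn] using abs_div_le_inv_norm p (norm_fst_le p)
  have hv' : v = fun z => (((2 * Real.pi) ^ 2 : ℝ) : ℂ)⁻¹ *
      planeSynthesis (fun p => mv p * h p) z := by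
    ext ⟨x, y⟩
    rw [hv, planeSynthesis]
    exact congrArg _ (congrArg _ (keyv x y))
  have hw' : w = fun z => (((2 * Real.pi) ^ 2 : ℝ) : ℂ)⁻¹ *
      planeSynthesis (fun p => mw p * h p) z := by
    ext ⟨x, y⟩
    rw [hw, planeSynthesis]
    exact congrArg _ (congrArg _ (keyw x y))
  have hcv := contDiff_planeSynthesis hv1 hv2
  have hcw := contDiff_planeSynthesis hw1 hw2
  refine ⟨fun x y => ?_, fun x y => ?_, ?_, ?_, fun x y => ?_, fun x y => ?_⟩
  · exact (keyv x y).symm ▸ integrable_planeKernel_mul hv1 (x, y)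
  · exact (keyw x y).symm ▸ integrable_planeKernel_mul hw1 (x, y)
  · rw [hv']
    exact contDiff_const.mul hcv
  · rw [hw']
    exact contDiff_const.mul hcw
  · simp only [hv', hw', deriv_const_mul_field']
    rw [deriv_planeSynthesis_fst hv1 hv2, deriv_planeSynthesis_snd hw1 hw2, ← mul_add]
    have hneg : planeSynthesis (fun p => Complex.I * (p.1 : ℂ) * (mv p * h p)) (x, y) =
        -planeSynthesis (fun p => Complex.I * (p.2 : ℂ) * (mw p * h p)) (x, y) := by
      simp only [planeSynthesis, ← integral_neg, hmv, hmw]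
      refine integral_congr_ae (Filter.Eventually.of_forall fun p => ?_)
      ring
    rw [hneg, neg_add_cancel, mul_zero]
  · simp only [hv', hw', deriv_const_mul_field']
    rw [deriv_planeSynthesis_snd hv1 hv2, deriv_planeSynthesis_fst hw1 hw2, ← mul_sub, hinv (x, y)]
    have hbv : Integrable fun p : ℝ × ℝ => Complex.I * (p.2 : ℂ) * (mv p * h p) := by
      refine hv2.mono' (by fun_prop) (Filter.Eventually.of_forall fun p => ?_)
      rw [norm_mul, norm_mul, Complex.norm_I, one_mul, Complex.norm_real]
      gcongr
      exact norm_snd_le p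
    have hbw : Integrable fun p : ℝ × ℝ => Complex.I * (p.1 : ℂ) * (mw p * h p) := by
      refine hw2.mono' (by fun_prop) (Filter.Eventually.of_forall fun p => ?_)
      rw [norm_mul, norm_mul, Complex.norm_I, one_mul, Complex.norm_real]
      gcongr
      exact norm_fst_le p
    congr 1
    simp only [planeSynthesis]
    rw [← integral_sub (integrable_planeKernel_mul hbv (x, y))
      (integrable_planeKernel_mul hbw (x, y))]
    -- The symbols add up to `(ξ² + η²)/(ξ² + η²)`, which is `1` off the null set `{0}`.
    have hae : ∀ᵐ p : ℝ × ℝ, p ≠ 0 := Measure.ae_ne volume 0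
    refine integral_congr_ae ?_
    filter_upwards [hae] with p hp
    have hne : ((p.1 : ℂ) ^ 2 + (p.2 : ℂ) ^ 2) ≠ 0 := by
      have h1 := norm_sq_le_sq_add_sq p
      have h2 : 0 < ‖p‖ := norm_pos_iff.2 hp
      have h3 : p.1 ^ 2 + p.2 ^ 2 ≠ 0 := (lt_of_lt_of_le (by positivity) h1).ne'
      exact_mod_cast h3
    rw [← mul_sub]
    congr 1
    simp only [hmv, hmw]
    push_cast
    field_simp
    linear_combination (-(p.1 : ℂ) ^ 2 - (p.2 : ℂ) ^ 2) * h p * Complex.I_sq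
end

section
/- Let λ, μ, ρ ∈ ℝ with ρ > 0, μ > 0 and λ + 2μ > 0, and set c_l = √((λ+2μ)/ρ) and c_s = √(μ/ρ). Let g : ℝ² → ℝ be a Schwartz function with Fourier transform ĝ, and let h : ℝ → ℝ be continuous. Write r = √(ξ²+η²) and define, for (ξ,η) ≠ (0,0), û₁(ξ,η,t) = ∫₀ᵗ [ sin(c_l(t−s)r)/(c_l r) − sin(c_s(t−s)r)/(c_s r) ] · (ξη/r²) ĝ(ξ,η) h(s) ds and û₂(ξ,η,t) = ∫₀ᵗ [ sin(c_l(t−s)r)/(c_l r) · (η²/r²) + sin(c_s(t−s)r)/(c_s r) · (ξ²/r²) ] ĝ(ξ,η) h(s) ds, with the values at the origin û₁(0,0,t) = 0 and û₂(0,0,t) = ĝ(0,0) ∫₀ᵗ (t−s) h(s) ds. Define u_d(x,y,t) = (2π)⁻² ∫_{ℝ²} e^{i(xξ+yη)} û_d(ξ,η,t) d(ξ,η) for d = 1, 2. Then all arising integrals converge absolutely, u₁ and u₂ are twice continuously differentiable on ℝ² × ℝ, and they satisfy ∂ₜₜu₁ = (1/ρ)[(λ+2μ)∂ₓₓu₁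 + μ ∂ᵧᵧu₁ + (λ+μ)∂ₓ∂ᵧu₂], ∂ₜₜu₂ = (1/ρ)[(λ+2μ)∂ᵧᵧu₂ + μ ∂ₓₓu₂ + (λ+μ)∂ₓ∂ᵧu₁] + g(x,y)h(t) for all (x,y,t), together with u_d(x,y,0) = 0 and ∂ₜu_d(x,y,0) = 0 for d = 1, 2 and all (x,y). -/
open MeasureTheory

/-!
After a Fourier transform in space the elastic system becomes, for each frequency `p = (ξ, η)`, a
linear ODE in time. Its matrix has the eigenvalues `-(c_l r)²` and `-(c_s r)²`, with eigenvectors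
along and across `p`, so Duhamel's formula for the force `(0, ĝ h)` is exactly `(û₁, û₂)`. The
displacements are then recovered by differentiating the inverse Fourier integrals.

*Differentiation under the integral.* `IsSymbol` describes functions `F p t` that are continuous in
`t` and rapidly decreasing in `p`, locally uniformly in `t`; the frequency `p = 0`, where `r`
vanishes, is a null set and is left out of all conditions. This class is stable under multiplication
by `iξ` and `iη`. By dominated convergence, the inverse transform `synth F` of a symbol is
continuous, and it is differentiable with partial derivatives `synth (iξ F)`, `synth (iη F)`,
`synth (∂ₜF)` when `∂ₜF` is a symbol too (`hasFDerivAt_synth`). Iterating gives the `C²` regularity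
and turns the PDE into a pointwise identity between symbols (`pde_of_symbol`).

*The ODE.* With `S = ∫₀ᵗ sin (ω (t - s)) h(s) ds` and `C = ∫₀ᵗ cos (ω (t - s)) h(s) ds` one has
`S' = ω C` and `C' = h - ω S` for merely continuous `h`, and `S / ω` and `C` are bounded uniformly
in `ω`. Together with `c_l² = (λ + 2μ)/ρ`, `c_s² = μ/ρ`, the second time derivatives of `û₁`, `û₂`
are seen to be the required combinations of `û₁`, `û₂` and the source `ĝ h`.

*The source.* Fourier inversion for Schwartz functions, carried from the inner product space `ℂ` to
`ℝ × ℝ`, shows that `ĝ` is Schwartz and that the source term is `g(x, y) h(t)`.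
-/

/-! ### Symbols and their inverse Fourier transforms -/

/-- Time-dependent symbols `F p t` on frequency space: measurable in `p`, continuous in `t`, and
rapidly decreasing in `p` locally uniformly in `t`. Nothing is asked at the frequency `p = 0`. -/
structure IsSymbol (F : ℝ × ℝ → ℝ → ℂ) : Prop where
  meas : ∀ t, AEStronglyMeasurable (fun p => F p t) volume
  cont : ∀ p, p ≠ 0 → Continuous (F p)
  decay : ∀ (T : ℝ) (k : ℕ), ∃ C : ℝ, ∀ p, p ≠ 0 → ∀ t, |t| ≤ T → (1 + ‖p‖) ^ k * ‖F p t‖ ≤ C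

/-- The inverse Fourier transform of `F` in the frequency variable, without the factor `(2π)⁻²`, at
the point `q = (x, y, t)`. -/
noncomputable def synth (F : ℝ × ℝ → ℝ → ℂ) (q : ℝ × ℝ × ℝ) : ℂ :=
  ∫ p : ℝ × ℝ, Complex.exp (Complex.I * ((q.1 * p.1 + q.2.1 * p.2 : ℝ) : ℂ)) * F p q.2.2

theorem ae_ne_zero_prod : ∀ᵐ p : ℝ × ℝ, p ≠ 0 := by
  rw [ae_iff]; simp

theorem norm_exp_I_mul (a : ℝ) : ‖Complex.exp (Complex.I * (a : ℂ))‖ = 1 := by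
  rw [mul_comm]; exact Complex.norm_exp_ofReal_mul_I a

theorem integrable_decay (C : ℝ) : Integrable (fun p : ℝ × ℝ => C * (1 + ‖p‖) ^ (-3 : ℝ)) := by
  refine (integrable_one_add_norm ?_).const_mul C
  simp; norm_num

theorem measurable_wave (x y : ℝ) : AEStronglyMeasurable (fun p : ℝ × ℝ =>
    Complex.exp (Complex.I * ((x * p.1 + y * p.2 : ℝ) : ℂ))) volume :=
  Continuous.aestronglyMeasurable (by fun_prop)

namespace IsSymbol
variable {F G : ℝ × ℝ → ℝ → ℂ}

theorem bound (hF : IsSymbol F) (T : ℝ) : ∃ C : ℝ, ∀ p, p ≠ 0 → ∀ t, |t| ≤ T →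
    ‖F p t‖ ≤ C * (1 + ‖p‖) ^ (-3 : ℝ) := by
  obtain ⟨C, hC⟩ := hF.decay T 3
  refine ⟨C, fun p hp t ht => ?_⟩
  have h0 : 0 < 1 + ‖p‖ := by positivity
  have := hC p hp t ht
  rw [Real.rpow_neg h0.le, ← div_eq_mul_inv, le_div_iff₀ (by positivity), mul_comm]
  have h3 : (1 + ‖p‖) ^ (3 : ℝ) = (1 + ‖p‖) ^ (3 : ℕ) := mod_cast Real.rpow_natCast _ 3
  rwa [h3]

theorem integrable (hF : IsSymbol F) (x y t : ℝ) : Integrable (fun p : ℝ × ℝ =>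
    Complex.exp (Complex.I * ((x * p.1 + y * p.2 : ℝ) : ℂ)) * F p t) := by
  obtain ⟨C, hC⟩ := hF.bound |t|
  refine (integrable_decay C).mono' ((measurable_wave x y).mul (hF.meas t)) ?_
  filter_upwards [ae_ne_zero_prod] with p hp
  rw [norm_mul, norm_exp_I_mul, one_mul]
  exact hC p hp t le_rfl

theorem add (hF : IsSymbol F) (hG : IsSymbol G) : IsSymbol (fun p t => F p t + G p t) where
  meas t := (hF.meas t).add (hG.meas t)
  cont p hp := (hF.cont p hp).add (hG.cont p hp)
  decay T k := by
    obtain ⟨C, hC⟩ := hF.decay T k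
    obtain ⟨D, hD⟩ := hG.decay T k
    refine ⟨C + D, fun p hp t ht => ?_⟩
    have := hC p hp t ht
    have := hD p hp t ht
    have := mul_le_mul_of_nonneg_left (norm_add_le (F p t) (G p t))
      (show 0 ≤ (1 + ‖p‖) ^ k by positivity)
    linarith

/-- Symbols may be multiplied by continuous functions of at most linear growth. -/
theorem mul_linear (hF : IsSymbol F) (m : ℝ × ℝ → ℂ) (hm : Continuous m) (M : ℝ)
    (hM : ∀ p, ‖m p‖ ≤ M * (1 + ‖p‖)) : IsSymbol (fun p t => m p * F p t) where
  meas t := hm.aestronglyMeasurable.mul (hF.meas t)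
  cont p hp := continuous_const.mul (hF.cont p hp)
  decay T k := by
    obtain ⟨C, hC⟩ := hF.decay T (k + 1)
    have hM0 : 0 ≤ M := by simpa using (norm_nonneg _).trans (hM 0)
    refine ⟨M * C, fun p hp t ht => ?_⟩
    calc (1 + ‖p‖) ^ k * ‖m p * F p t‖ = (1 + ‖p‖) ^ k * (‖m p‖ * ‖F p t‖) := by rw [norm_mul]
      _ ≤ (1 + ‖p‖) ^ k * (M * (1 + ‖p‖) * ‖F p t‖) := by gcongr; exact hM p
      _ = M * ((1 + ‖p‖) ^ (k + 1) * ‖F p t‖) := by ring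
      _ ≤ M * C := by gcongr; exact hC p hp t ht

theorem const_mul (hF : IsSymbol F) (c : ℂ) : IsSymbol (fun p t => c * F p t) :=
  hF.mul_linear (fun _ => c) continuous_const ‖c‖ fun p =>
    le_mul_of_one_le_right (norm_nonneg _) (by simp)

theorem dx (hF : IsSymbol F) : IsSymbol (fun p t => Complex.I * (p.1 : ℂ) * F p t) :=
  hF.mul_linear (fun p => Complex.I * (p.1 : ℂ)) (by fun_prop) 1 fun p => by
    have := norm_fst_le p
    simp only [norm_mul, Complex.norm_I, Complex.norm_real, one_mul]
    linarith

theorem dy (hF : IsSymbol F) : IsSymbol (fun p t => Complex.I * (p.2 : ℂ) * F p t) :=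
  hF.mul_linear (fun p => Complex.I * (p.2 : ℂ)) (by fun_prop) 1 fun p => by
    have := norm_snd_le p
    simp only [norm_mul, Complex.norm_I, Complex.norm_real, one_mul]
    linarith

theorem strip_mem_nhds (q₀ : ℝ × ℝ × ℝ) : {q : ℝ × ℝ × ℝ | |q.2.2| < |q₀.2.2| + 1} ∈ nhds q₀ :=
  (isOpen_lt (by fun_prop) continuous_const).mem_nhds (by simp)

theorem continuous_synth (hF : IsSymbol F) : Continuous (synth F) := by
  refine continuous_iff_continuousAt.2 fun q₀ => ?_
  obtain ⟨C, hC⟩ := hF.bound (|q₀.2.2| + 1)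
  refine continuousAt_of_dominated (bound := fun p => C * (1 + ‖p‖) ^ (-3 : ℝ)) ?_ ?_
    (integrable_decay C) ?_
  · exact .of_forall fun q => (measurable_wave _ _).mul (hF.meas _)
  · filter_upwards [strip_mem_nhds q₀] with q hq
    filter_upwards [ae_ne_zero_prod] with p hp
    rw [norm_mul, norm_exp_I_mul, one_mul]
    exact hC p hp _ (le_of_lt hq)
  · filter_upwards [ae_ne_zero_prod] with p hp
    have := hF.cont p hp
    exact Continuous.continuousAt (by fun_prop)

end IsSymbol

/-- The linear form `(v₁, v₂, v₃) ↦ v₁ a + v₂ b + v₃ c`, i.e. the differential of a function on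
`ℝ × ℝ × ℝ` with partial derivatives `a`, `b`, `c`. -/
noncomputable def diff3 (a b c : ℂ) : ℝ × ℝ × ℝ →L[ℝ] ℂ :=
  (ContinuousLinearMap.fst ℝ ℝ (ℝ × ℝ)).smulRight a +
  ((ContinuousLinearMap.fst ℝ ℝ ℝ).comp (ContinuousLinearMap.snd ℝ ℝ (ℝ × ℝ))).smulRight b +
  ((ContinuousLinearMap.snd ℝ ℝ ℝ).comp (ContinuousLinearMap.snd ℝ ℝ (ℝ × ℝ))).smulRight c

theorem diff3_apply (a b c : ℂ) (v : ℝ × ℝ × ℝ) :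
    diff3 a b c v = v.1 * a + v.2.1 * b + v.2.2 * c := by
  simp [diff3]

theorem norm_diff3_le (a b c : ℂ) : ‖diff3 a b c‖ ≤ ‖a‖ + ‖b‖ + ‖c‖ := by
  refine ContinuousLinearMap.opNorm_le_bound _ (by positivity) fun v => ?_
  rw [diff3_apply]
  have h1 : ‖v.1‖ ≤ ‖v‖ := norm_fst_le v
  have h2 : ‖v.2.1‖ ≤ ‖v‖ := (norm_fst_le v.2).trans (norm_snd_le v)
  have h3 : ‖v.2.2‖ ≤ ‖v‖ := (norm_snd_le v.2).trans (norm_snd_le v)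
  refine norm_add₃_le.trans ?_
  simp only [norm_mul, Complex.norm_real]
  have := mul_le_mul_of_nonneg_right h1 (norm_nonneg a)
  have := mul_le_mul_of_nonneg_right h2 (norm_nonneg b)
  have := mul_le_mul_of_nonneg_right h3 (norm_nonneg c)
  linarith

theorem contDiff_diff3 {n : WithTop ℕ∞} {a b c : ℝ × ℝ × ℝ → ℂ} (ha : ContDiff ℝ n a)
    (hb : ContDiff ℝ n b) (hc : ContDiff ℝ n c) :
    ContDiff ℝ n (fun q => diff3 (a q) (b q) (c q)) :=
  ((contDiff_const.smulRight ha).add (contDiff_const.smulRight hb)).add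
    (contDiff_const.smulRight hc)

theorem continuous_diff3 : Continuous (fun z : ℂ × ℂ × ℂ => diff3 z.1 z.2.1 z.2.2) := by
  have : ∀ L : ℝ × ℝ × ℝ →L[ℝ] ℝ, Continuous (fun z : ℂ => L.smulRight z) := fun L =>
    ((contDiff_const (n := 0) (c := L)).smulRight contDiff_id).continuous
  exact (((this _).comp continuous_fst).add ((this _).comp (by fun_prop))).add
    ((this _).comp (by fun_prop))

theorem aestronglyMeasurable_diff3 {a b c : ℝ × ℝ → ℂ} (ha : AEStronglyMeasurable a volume)
    (hb : AEStronglyMeasurable b volume) (hc : AEStronglyMeasurable c volume) :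
    AEStronglyMeasurable (fun p => diff3 (a p) (b p) (c p)) volume :=
  continuous_diff3.comp_aestronglyMeasurable (f := fun p => (a p, b p, c p))
    (ha.prodMk (hb.prodMk hc))

section Differentiation
variable {F F' F'' : ℝ × ℝ → ℝ → ℂ}

/-- The differential at `q = (x, y, t)` of the integrand `exp (i (x ξ + y η)) F(p, t)` of `synth F`,
where `F'` stands for the time derivative of `F`. -/
noncomputable def synthDeriv (F F' : ℝ × ℝ → ℝ → ℂ) (q : ℝ × ℝ × ℝ) (p : ℝ × ℝ) :
    ℝ × ℝ × ℝ →L[ℝ] ℂ :=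
  diff3
    (Complex.exp (Complex.I * ((q.1 * p.1 + q.2.1 * p.2 : ℝ) : ℂ)) *
      (Complex.I * (p.1 : ℂ) * F p q.2.2))
    (Complex.exp (Complex.I * ((q.1 * p.1 + q.2.1 * p.2 : ℝ) : ℂ)) *
      (Complex.I * (p.2 : ℂ) * F p q.2.2))
    (Complex.exp (Complex.I * ((q.1 * p.1 + q.2.1 * p.2 : ℝ) : ℂ)) * F' p q.2.2)

theorem hasFDerivAt_wave_mul (p : ℝ × ℝ) {q : ℝ × ℝ × ℝ}
    (hd : HasDerivAt (F p) (F' p q.2.2) q.2.2) :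
    HasFDerivAt (fun q : ℝ × ℝ × ℝ =>
      Complex.exp (Complex.I * ((q.1 * p.1 + q.2.1 * p.2 : ℝ) : ℂ)) * F p q.2.2)
      (synthDeriv F F' q p) q := by
  have h1 : HasFDerivAt (fun q : ℝ × ℝ × ℝ => ((q.1 * p.1 + q.2.1 * p.2 : ℝ) : ℂ))
      (diff3 p.1 p.2 0) q := by
    have : (fun q : ℝ × ℝ × ℝ => ((q.1 * p.1 + q.2.1 * p.2 : ℝ) : ℂ)) =
        diff3 (p.1 : ℂ) (p.2 : ℂ) 0 := by
      ext q; simp [diff3_apply]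
    rw [this]
    exact (diff3 (p.1 : ℂ) (p.2 : ℂ) 0).hasFDerivAt
  have h2 := (h1.const_mul Complex.I).cexp
  have h3 : HasFDerivAt (fun q : ℝ × ℝ × ℝ => F p q.2.2) _ q :=
    hd.hasFDerivAt.comp q
      ((ContinuousLinearMap.snd ℝ ℝ ℝ).comp (ContinuousLinearMap.snd ℝ ℝ (ℝ × ℝ))).hasFDerivAt
  refine (h2.mul h3).congr_fderiv ?_
  refine ContinuousLinearMap.ext fun v => ?_
  simp [synthDeriv, diff3_apply]
  ring

/-- Differentiation under the integral sign: the partial derivatives of `synth F` are the inverse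
transforms of `iξ F`, `iη F` and `∂ₜF`. -/
theorem hasFDerivAt_synth (hF : IsSymbol F) (hF' : IsSymbol F')
    (hd : ∀ p, p ≠ 0 → ∀ t, HasDerivAt (F p) (F' p t) t) (q₀ : ℝ × ℝ × ℝ) :
    HasFDerivAt (synth F) (diff3 (synth (fun p t => Complex.I * (p.1 : ℂ) * F p t) q₀)
      (synth (fun p t => Complex.I * (p.2 : ℂ) * F p t) q₀) (synth F' q₀)) q₀ := by
  obtain ⟨A, hA⟩ := hF.dx.bound (|q₀.2.2| + 1)
  obtain ⟨B, hB⟩ := hF.dy.bound (|q₀.2.2| + 1)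
  obtain ⟨C, hC⟩ := hF'.bound (|q₀.2.2| + 1)
  have hbound : ∀ p, p ≠ 0 → ∀ q : ℝ × ℝ × ℝ, |q.2.2| < |q₀.2.2| + 1 →
      ‖synthDeriv F F' q p‖ ≤ (A + B + C) * (1 + ‖p‖) ^ (-3 : ℝ) := by
    intro p hp q hq
    refine (norm_diff3_le _ _ _).trans ?_
    rw [norm_mul, norm_mul _ (_ * _ * _), norm_mul _ (F' _ _), norm_exp_I_mul, one_mul, one_mul,
      one_mul]
    rw [add_mul, add_mul]
    exact add_le_add (add_le_add (hA p hp _ hq.le) (hB p hp _ hq.le)) (hC p hp _ hq.le)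
  have hmeas : AEStronglyMeasurable (synthDeriv F F' q₀) volume := by
    have m1 := (hF.dx.integrable q₀.1 q₀.2.1 q₀.2.2).aestronglyMeasurable
    have m2 := (hF.dy.integrable q₀.1 q₀.2.1 q₀.2.2).aestronglyMeasurable
    have m3 := (hF'.integrable q₀.1 q₀.2.1 q₀.2.2).aestronglyMeasurable
    exact aestronglyMeasurable_diff3 m1 m2 m3
  have hdiff : ∀ᵐ p : ℝ × ℝ, ∀ q ∈ {q : ℝ × ℝ × ℝ | |q.2.2| < |q₀.2.2| + 1},
      HasFDerivAt (fun q : ℝ × ℝ × ℝ =>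
        Complex.exp (Complex.I * ((q.1 * p.1 + q.2.1 * p.2 : ℝ) : ℂ)) * F p q.2.2)
        (synthDeriv F F' q p) q := by
    filter_upwards [ae_ne_zero_prod] with p hp q hq
    exact hasFDerivAt_wave_mul p (hd p hp q.2.2)
  have hbd : ∀ᵐ p : ℝ × ℝ, ∀ q ∈ {q : ℝ × ℝ × ℝ | |q.2.2| < |q₀.2.2| + 1},
      ‖synthDeriv F F' q p‖ ≤ (A + B + C) * (1 + ‖p‖) ^ (-3 : ℝ) := by
    filter_upwards [ae_ne_zero_prod] with p hp q hq using hbound p hp q hq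
  have hFm : ∀ᶠ q : ℝ × ℝ × ℝ in nhds q₀, AEStronglyMeasurable (fun p : ℝ × ℝ =>
      Complex.exp (Complex.I * ((q.1 * p.1 + q.2.1 * p.2 : ℝ) : ℂ)) * F p q.2.2) volume :=
    .of_forall fun q => (hF.integrable q.1 q.2.1 q.2.2).aestronglyMeasurable
  have key : HasFDerivAt (synth F) (∫ p, synthDeriv F F' q₀ p) q₀ :=
    hasFDerivAt_integral_of_dominated_of_fderiv_le (IsSymbol.strip_mem_nhds q₀) hFm
      (hF.integrable q₀.1 q₀.2.1 q₀.2.2) hmeas hbd (integrable_decay _) hdiff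
  have hint : Integrable (synthDeriv F F' q₀) := by
    refine (integrable_decay (A + B + C)).mono' hmeas ?_
    filter_upwards [ae_ne_zero_prod] with p hp using hbound p hp q₀ (by simp)
  refine key.congr_fderiv ?_
  refine ContinuousLinearMap.ext fun v => ?_
  rw [ContinuousLinearMap.integral_apply hint, diff3_apply]
  simp only [synthDeriv, diff3_apply]
  have i1 := (hF.dx.integrable q₀.1 q₀.2.1 q₀.2.2).const_mul (v.1 : ℂ)
  have i2 := (hF.dy.integrable q₀.1 q₀.2.1 q₀.2.2).const_mul (v.2.1 : ℂ)
  have i3 := (hF'.integrable q₀.1 q₀.2.1 q₀.2.2).const_mul (v.2.2 : ℂ)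
  exact (integral_add (i1.add i2) i3).trans (congrArg₂ (· + ·)
    ((integral_add i1 i2).trans (congrArg₂ (· + ·) (integral_const_mul _ _)
      (integral_const_mul _ _))) (integral_const_mul _ _))

theorem contDiff_one_synth (hF : IsSymbol F) (hF' : IsSymbol F')
    (hd : ∀ p, p ≠ 0 → ∀ t, HasDerivAt (F p) (F' p t) t) : ContDiff ℝ 1 (synth F) :=
  contDiff_one_iff_hasFDerivAt.2 ⟨_, continuous_diff3.comp (hF.dx.continuous_synth.prodMk
    (hF.dy.continuous_synth.prodMk hF'.continuous_synth)), hasFDerivAt_synth hF hF' hd⟩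

theorem contDiff_two_synth (hF : IsSymbol F) (hF' : IsSymbol F') (hF'' : IsSymbol F'')
    (hd : ∀ p, p ≠ 0 → ∀ t, HasDerivAt (F p) (F' p t) t)
    (hd' : ∀ p, p ≠ 0 → ∀ t, HasDerivAt (F' p) (F'' p t) t) : ContDiff ℝ 2 (synth F) := by
  refine (contDiff_succ_iff_hasFDerivAt (n := 1)).2 ⟨_, ?_, hasFDerivAt_synth hF hF' hd⟩
  exact contDiff_diff3
    (contDiff_one_synth hF.dx hF'.dx fun p hp t => (hd p hp t).const_mul _)
    (contDiff_one_synth hF.dy hF'.dy fun p hp t => (hd p hp t).const_mul _)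
    (contDiff_one_synth hF' hF'' hd')

theorem hasDerivAt_synth_x (hF : IsSymbol F) (hF' : IsSymbol F')
    (hd : ∀ p, p ≠ 0 → ∀ t, HasDerivAt (F p) (F' p t) t) (x y t : ℝ) :
    HasDerivAt (fun x' => synth F (x', y, t))
      (synth (fun p t => Complex.I * (p.1 : ℂ) * F p t) (x, y, t)) x := by
  have := (hasFDerivAt_synth hF hF' hd (x, y, t)).comp_hasDerivAt x
    ((hasDerivAt_id x).prodMk (hasDerivAt_const x (y, t)))
  simp only [diff3_apply, Complex.ofReal_one, Complex.ofReal_zero, one_mul, zero_mul, add_zero,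
    Prod.fst_zero, Prod.snd_zero] at this
  exact this

theorem hasDerivAt_synth_y (hF : IsSymbol F) (hF' : IsSymbol F')
    (hd : ∀ p, p ≠ 0 → ∀ t, HasDerivAt (F p) (F' p t) t) (x y t : ℝ) :
    HasDerivAt (fun y' => synth F (x, y', t))
      (synth (fun p t => Complex.I * (p.2 : ℂ) * F p t) (x, y, t)) y := by
  have := (hasFDerivAt_synth hF hF' hd (x, y, t)).comp_hasDerivAt y
    ((hasDerivAt_const y x).prodMk ((hasDerivAt_id y).prodMk (hasDerivAt_const y t)))
  simp only [diff3_apply, Complex.ofReal_one, Complex.ofReal_zero, one_mul, zero_mul, add_zero,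
    zero_add] at this
  exact this

theorem hasDerivAt_synth_t (hF : IsSymbol F) (hF' : IsSymbol F')
    (hd : ∀ p, p ≠ 0 → ∀ t, HasDerivAt (F p) (F' p t) t) (x y t : ℝ) :
    HasDerivAt (fun t' => synth F (x, y, t')) (synth F' (x, y, t)) t := by
  have := (hasFDerivAt_synth hF hF' hd (x, y, t)).comp_hasDerivAt t
    ((hasDerivAt_const t x).prodMk ((hasDerivAt_const t y).prodMk (hasDerivAt_id t)))
  simp only [diff3_apply, Complex.ofReal_one, Complex.ofReal_zero, one_mul, zero_mul, add_zero,
    zero_add] at this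
  exact this

end Differentiation

/-! ### Fourier inversion on the plane -/

open FourierTransform SchwartzMap in
/-- The Fourier transform of a Schwartz function, in the normalization `∫ e^{-i⟨q,p⟩} g(q) dq`, is
Schwartz and satisfies the inversion formula. Since `ℝ × ℝ` carries the sup norm, the inversion
theorem is applied on the inner product space `ℂ`, at frequencies rescaled by `(2π)⁻¹`. -/
theorem fourier_facts (g : SchwartzMap (ℝ × ℝ) ℝ) (ghat : ℝ × ℝ → ℂ)
    (hghat : ∀ p : ℝ × ℝ, ghat p =
      ∫ q : ℝ × ℝ, Complex.exp (-(Complex.I * ((q.1 * p.1 + q.2 * p.2 : ℝ) : ℂ))) *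
        ((g q : ℝ) : ℂ)) :
    (∃ f : SchwartzMap (ℝ × ℝ) ℂ, ∀ p, ghat p = f p) ∧
    ∀ x y : ℝ, ∫ p : ℝ × ℝ, Complex.exp (Complex.I * ((x * p.1 + y * p.2 : ℝ) : ℂ)) * ghat p =
      (((2 * Real.pi) ^ 2 : ℝ) : ℂ) * ((g (x, y) : ℝ) : ℂ) := by
  let G : SchwartzMap ℂ ℂ := SchwartzMap.postcompCLM Complex.ofRealCLM
    (SchwartzMap.compCLMOfContinuousLinearEquiv ℝ Complex.equivRealProdCLM g)
  have hG : ∀ z : ℂ, G z = ((g (z.re, z.im) : ℝ) : ℂ) := fun z => rfl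
  have hpi : (2 * Real.pi)⁻¹ ≠ 0 := by positivity
  let L : (ℝ × ℝ) ≃L[ℝ] ℂ := Complex.equivRealProdCLM.symm.trans
    (ContinuousLinearEquiv.smulLeft (Units.mk0 _ hpi))
  have hL : ∀ p : ℝ × ℝ, L p = (2 * Real.pi)⁻¹ • (⟨p.1, p.2⟩ : ℂ) := fun p => rfl
  have key : ∀ p, ghat p = (𝓕 G) (L p) := by
    intro p
    rw [hghat, fourier_coe, Real.fourier_eq',
      ← Complex.volume_preserving_equiv_real_prod.integral_comp
        Complex.measurableEquivRealProd.measurableEmbedding]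
    refine integral_congr_ae (.of_forall fun z => ?_)
    simp only [hG, hL, smul_eq_mul, Complex.measurableEquivRealProd_apply]
    congr 2
    rw [inner_smul_right, Complex.inner]
    simp only [Complex.mul_re, Complex.conj_re, Complex.conj_im]
    have : (Real.pi : ℂ) ≠ 0 := by exact_mod_cast Real.pi_ne_zero
    push_cast
    field_simp
    ring
  refine ⟨⟨SchwartzMap.compCLMOfContinuousLinearEquiv ℝ L (𝓕 G), key⟩, fun x y => ?_⟩
  have inv : (𝓕⁻ (𝓕 G)) (⟨x, y⟩ : ℂ) = G ⟨x, y⟩ := by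
    rw [FourierTransform.fourierInv_fourier_eq]
  rw [fourierInv_coe, Real.fourierInv_eq', hG] at inv
  have hs := Measure.integral_comp_smul (volume : Measure ℂ)
    (fun v => Complex.exp ((2 * Real.pi * inner ℝ v (⟨x, y⟩ : ℂ) : ℝ) * Complex.I) • (𝓕 G) v)
    (2 * Real.pi)⁻¹
  rw [inv] at hs
  rw [← Complex.volume_preserving_equiv_real_prod.integral_comp
        Complex.measurableEquivRealProd.measurableEmbedding]
  calc _ = _ := integral_congr_ae (.of_forall fun z => ?_)
    _ = _ := hs
    _ = _ := ?_
  · simp only [key, hL, smul_eq_mul, Complex.measurableEquivRealProd_apply]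
    congr 2
    rw [inner_smul_left, Complex.inner]
    simp only [Complex.mul_re, Complex.conj_re, Complex.conj_im]
    have : (Real.pi : ℂ) ≠ 0 := by exact_mod_cast Real.pi_ne_zero
    simp
    field_simp
  · rw [Complex.finrank_real_complex, abs_of_pos (by positivity)]
    rw [inv_pow, inv_inv, Complex.real_smul]

/-! ### Duhamel integrals -/

/-- The Duhamel integral `∫₀ᵗ sin (ω (t - s)) h(s) ds`. -/
noncomputable def sinDuhamel (h : ℝ → ℝ) (ω t : ℝ) : ℝ :=
  ∫ s in (0:ℝ)..t, Real.sin (ω * (t - s)) * h s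

/-- The Duhamel integral `∫₀ᵗ cos (ω (t - s)) h(s) ds`. -/
noncomputable def cosDuhamel (h : ℝ → ℝ) (ω t : ℝ) : ℝ :=
  ∫ s in (0:ℝ)..t, Real.cos (ω * (t - s)) * h s

/-- The addition theorem separates `t` from `s`, so that the fundamental theorem of calculus applies
although `h` is only continuous. -/
theorem sinDuhamel_eq {h : ℝ → ℝ} (hh : Continuous h) (ω t : ℝ) : sinDuhamel h ω t =
    Real.sin (ω * t) * (∫ s in (0:ℝ)..t, Real.cos (ω * s) * h s) -
      Real.cos (ω * t) * ∫ s in (0:ℝ)..t, Real.sin (ω * s) * h s := by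
  rw [← intervalIntegral.integral_const_mul, ← intervalIntegral.integral_const_mul,
    ← intervalIntegral.integral_sub (Continuous.intervalIntegrable (by fun_prop) _ _)
      (Continuous.intervalIntegrable (by fun_prop) _ _)]
  refine intervalIntegral.integral_congr fun s _ => ?_
  simp only [mul_sub, Real.sin_sub]
  ring

theorem cosDuhamel_eq {h : ℝ → ℝ} (hh : Continuous h) (ω t : ℝ) : cosDuhamel h ω t =
    Real.cos (ω * t) * (∫ s in (0:ℝ)..t, Real.cos (ω * s) * h s) +
      Real.sin (ω * t) * ∫ s in (0:ℝ)..t, Real.sin (ω * s) * h s := by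
  rw [← intervalIntegral.integral_const_mul, ← intervalIntegral.integral_const_mul,
    ← intervalIntegral.integral_add (Continuous.intervalIntegrable (by fun_prop) _ _)
      (Continuous.intervalIntegrable (by fun_prop) _ _)]
  refine intervalIntegral.integral_congr fun s _ => ?_
  simp only [mul_sub, Real.cos_sub]
  ring

theorem hasDerivAt_sinDuhamel {h : ℝ → ℝ} (hh : Continuous h) (ω t : ℝ) :
    HasDerivAt (sinDuhamel h ω) (ω * cosDuhamel h ω t) t := by
  rw [funext (sinDuhamel_eq hh ω), cosDuhamel_eq hh]
  have hC := (show Continuous fun s => Real.cos (ω * s) * h s by fun_prop).integral_hasStrictDerivAt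
    0 t |>.hasDerivAt
  have hS := (show Continuous fun s => Real.sin (ω * s) * h s by fun_prop).integral_hasStrictDerivAt
    0 t |>.hasDerivAt
  have hω := (hasDerivAt_id t).const_mul ω
  convert! (hω.sin.mul hC).sub (hω.cos.mul hS) using 1
  simp only [id]
  ring

theorem hasDerivAt_cosDuhamel {h : ℝ → ℝ} (hh : Continuous h) (ω t : ℝ) :
    HasDerivAt (cosDuhamel h ω) (h t - ω * sinDuhamel h ω t) t := by
  rw [funext (cosDuhamel_eq hh ω), sinDuhamel_eq hh]
  have hC := (show Continuous fun s => Real.cos (ω * s) * h s by fun_prop).integral_hasStrictDerivAt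
    0 t |>.hasDerivAt
  have hS := (show Continuous fun s => Real.sin (ω * s) * h s by fun_prop).integral_hasStrictDerivAt
    0 t |>.hasDerivAt
  have hω := (hasDerivAt_id t).const_mul ω
  convert! (hω.cos.mul hC).add (hω.sin.mul hS) using 1
  simp only [id]
  linear_combination -h t * Real.sin_sq_add_cos_sq (ω * t)

theorem continuous_sinDuhamel {h : ℝ → ℝ} (hh : Continuous h) (t : ℝ) :
    Continuous (fun ω => sinDuhamel h ω t) :=
  intervalIntegral.continuous_parametric_intervalIntegral_of_continuous' (by fun_prop) 0 t

theorem continuous_cosDuhamel {h : ℝ → ℝ} (hh : Continuous h) (t : ℝ) :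
    Continuous (fun ω => cosDuhamel h ω t) :=
  intervalIntegral.continuous_parametric_intervalIntegral_of_continuous' (by fun_prop) 0 t

/-- Bounds on `|t| ≤ T` that are uniform in the frequency `ω`; the division by `ω` is absorbed by
`|sin (ω (t - s))| ≤ |ω| |t - s|`. -/
theorem duhamel_bounds {h : ℝ → ℝ} (hh : Continuous h) (T : ℝ) : ∃ M : ℝ, 0 ≤ M ∧
    ∀ t, |t| ≤ T → |h t| ≤ M ∧ ∀ ω, |sinDuhamel h ω t / ω| ≤ M ∧ |cosDuhamel h ω t| ≤ M := by
  obtain ⟨A, hA⟩ := (isCompact_Icc (a := -T) (b := T)).exists_bound_of_continuousOn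
    hh.continuousOn
  have hA' : ∀ s, |s| ≤ T → |h s| ≤ |A| := fun s hs => (hA s (abs_le.1 hs)).trans (le_abs_self A)
  refine ⟨|A| * (1 + |T| + 2 * |T| * |T|), by positivity, fun t ht => ?_⟩
  have hT : 0 ≤ T := (abs_nonneg t).trans ht
  have hs : ∀ s ∈ Set.uIoc 0 t, |s| ≤ T := by
    intro s hs
    refine le_trans ?_ ht
    rcases Set.mem_uIoc.1 hs with h | h
    · rw [abs_of_pos h.1]; exact h.2.trans (le_abs_self t)
    · rw [abs_of_nonpos h.2]; exact (neg_le_neg h.1.le).trans (neg_le_abs t)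
  rw [abs_of_nonneg hT]
  have hA0 := abs_nonneg A
  have e1 : 0 ≤ |A| * T := by positivity
  have e2 : 0 ≤ |A| * (2 * T * T) := by positivity
  refine ⟨?_, fun ω => ⟨?_, ?_⟩⟩
  · have := hA' t ht
    linarith
  · have : |sinDuhamel h ω t| ≤ |ω| * (2 * T) * |A| * |t - 0| := by
      rw [sinDuhamel, ← Real.norm_eq_abs]
      refine intervalIntegral.norm_integral_le_of_norm_le_const fun s hs' => ?_
      rw [norm_mul]
      refine mul_le_mul ?_ (hA' s (hs s hs')) (norm_nonneg _) (by positivity)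
      refine Real.abs_sin_le_abs.trans ?_
      rw [abs_mul]
      gcongr
      have := hs s hs'
      exact (abs_sub t s).trans (by linarith)
    rw [abs_div]
    refine div_le_of_le_mul₀ (abs_nonneg _) (by positivity) (this.trans ?_)
    rw [sub_zero]
    calc |ω| * (2 * T) * |A| * |t| ≤ |ω| * (2 * T) * |A| * T := by gcongr
      _ = |A| * (2 * T * T) * |ω| := by ring
      _ ≤ _ := by gcongr; linarith
  · have : |cosDuhamel h ω t| ≤ |A| * |t - 0| := by
      rw [cosDuhamel, ← Real.norm_eq_abs]
      refine intervalIntegral.norm_integral_le_of_norm_le_const fun s hs' => ?_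
      rw [norm_mul]
      have h1 : ‖Real.cos (ω * (t - s))‖ ≤ 1 := Real.abs_cos_le_one _
      have h2 : ‖h s‖ ≤ |A| := hA' s (hs s hs')
      calc _ ≤ 1 * ‖h s‖ := by gcongr
        _ ≤ _ := by rwa [one_mul]
    rw [sub_zero] at this
    have : |A| * |t| ≤ |A| * T := by gcongr
    linarith

/-! ### The PDE at the level of symbols -/

theorem synth_add {F G : ℝ × ℝ → ℝ → ℂ} (hF : IsSymbol F) (hG : IsSymbol G) (q : ℝ × ℝ × ℝ) :
    synth (fun p t => F p t + G p t) q = synth F q + synth G q := by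
  simp only [synth, mul_add]
  exact integral_add (hF.integrable _ _ _) (hG.integrable _ _ _)

theorem synth_const_mul (F : ℝ × ℝ → ℝ → ℂ) (c : ℂ) (q : ℝ × ℝ × ℝ) :
    synth (fun p t => c * F p t) q = c * synth F q := by
  simp only [synth, mul_left_comm _ c]
  exact integral_const_mul _ _

theorem IsSymbol.congr {F G : ℝ × ℝ → ℝ → ℂ} (hF : IsSymbol F)
    (h : ∀ p, p ≠ 0 → ∀ t, G p t = F p t) : IsSymbol G where
  meas t := (hF.meas t).congr (by
    filter_upwards [ae_ne_zero_prod] with p hp using (h p hp t).symm)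
  cont p hp := by rw [funext (h p hp)]; exact hF.cont p hp
  decay T k := by
    obtain ⟨C, hC⟩ := hF.decay T k
    exact ⟨C, fun p hp t ht => by rw [h p hp t]; exact hC p hp t ht⟩

/-- If the second time derivative of `F` is `r (a (iξ)² F + b (iη)² F + d (iξ)(iη) G) + K`, then
`synth F` is `C²` and satisfies the corresponding PDE, with `synth G` coupled in and with source
`synth K`. -/
theorem pde_of_symbol {F F' G G' K : ℝ × ℝ → ℝ → ℂ} (hF : IsSymbol F) (hF' : IsSymbol F')
    (hG : IsSymbol G) (hG' : IsSymbol G') (hK : IsSymbol K)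
    (hd : ∀ p, p ≠ 0 → ∀ t, HasDerivAt (F p) (F' p t) t)
    (hdG : ∀ p, p ≠ 0 → ∀ t, HasDerivAt (G p) (G' p t) t) (r a b d : ℂ)
    (hd' : ∀ p, p ≠ 0 → ∀ t, HasDerivAt (F' p)
      (r * (a * (Complex.I * (p.1 : ℂ) * (Complex.I * (p.1 : ℂ) * F p t)) +
        b * (Complex.I * (p.2 : ℂ) * (Complex.I * (p.2 : ℂ) * F p t)) +
        d * (Complex.I * (p.1 : ℂ) * (Complex.I * (p.2 : ℂ) * G p t))) + K p t) t) :
    ContDiff ℝ 2 (synth F) ∧ ∀ x y t : ℝ,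
      iteratedDeriv 2 (fun τ : ℝ => synth F (x, y, τ)) t =
        r * (a * iteratedDeriv 2 (fun x' => synth F (x', y, t)) x +
          b * iteratedDeriv 2 (fun y' => synth F (x, y', t)) y +
          d * deriv (fun x' => deriv (fun y' => synth G (x', y', t)) y) x) +
        synth K (x, y, t) := by
  have s1 := hF.dx.dx.const_mul a
  have s2 := hF.dy.dy.const_mul b
  have s3 := hG.dy.dx.const_mul d
  have s4 := ((s1.add s2).add s3).const_mul r
  refine ⟨contDiff_two_synth hF hF' (s4.add hK) hd hd', fun x y t => ?_⟩
  have hdx := fun p hp t => (hd p hp t).const_mul (Complex.I * (p.1 : ℂ))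
  have hdy := fun p hp t => (hd p hp t).const_mul (Complex.I * (p.2 : ℂ))
  have hdGy := fun p hp t => (hdG p hp t).const_mul (Complex.I * (p.2 : ℂ))
  have et : iteratedDeriv 2 (fun τ : ℝ => synth F (x, y, τ)) t = synth (fun p t =>
      r * (a * (Complex.I * (p.1 : ℂ) * (Complex.I * (p.1 : ℂ) * F p t)) +
        b * (Complex.I * (p.2 : ℂ) * (Complex.I * (p.2 : ℂ) * F p t)) +
        d * (Complex.I * (p.1 : ℂ) * (Complex.I * (p.2 : ℂ) * G p t))) + K p t) (x, y, t) := by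
    rw [iteratedDeriv_succ, iteratedDeriv_one,
      funext fun τ => (hasDerivAt_synth_t hF hF' hd x y τ).deriv]
    exact (hasDerivAt_synth_t hF' (s4.add hK) hd' x y t).deriv
  have ex : iteratedDeriv 2 (fun x' : ℝ => synth F (x', y, t)) x =
      synth (fun p t => Complex.I * (p.1 : ℂ) * (Complex.I * (p.1 : ℂ) * F p t)) (x, y, t) := by
    rw [iteratedDeriv_succ, iteratedDeriv_one,
      funext fun τ => (hasDerivAt_synth_x hF hF' hd τ y t).deriv]
    exact (hasDerivAt_synth_x hF.dx hF'.dx hdx x y t).deriv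
  have ey : iteratedDeriv 2 (fun y' : ℝ => synth F (x, y', t)) y =
      synth (fun p t => Complex.I * (p.2 : ℂ) * (Complex.I * (p.2 : ℂ) * F p t)) (x, y, t) := by
    rw [iteratedDeriv_succ, iteratedDeriv_one,
      funext fun τ => (hasDerivAt_synth_y hF hF' hd x τ t).deriv]
    exact (hasDerivAt_synth_y hF.dy hF'.dy hdy x y t).deriv
  have exy : deriv (fun x' => deriv (fun y' => synth G (x', y', t)) y) x =
      synth (fun p t => Complex.I * (p.1 : ℂ) * (Complex.I * (p.2 : ℂ) * G p t)) (x, y, t) := by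
    rw [funext fun x' => (hasDerivAt_synth_y hG hG' hdG x' y t).deriv]
    exact (hasDerivAt_synth_x hG.dy hG'.dy hdGy x y t).deriv
  rw [et, ex, ey, exy, synth_add s4 hK, synth_const_mul, synth_add (s1.add s2) s3,
    synth_add s1 s2, synth_const_mul, synth_const_mul, synth_const_mul]

/-! ### The kernels of the solution formula -/

/-- A kernel bounded in `p`, locally uniformly in `t`, gives a symbol when multiplied by a Schwartz
function. -/
theorem isSymbol_kernel (f : SchwartzMap (ℝ × ℝ) ℂ) (K : ℝ × ℝ → ℝ → ℝ)
    (hm : ∀ t, Measurable fun p => K p t) (hc : ∀ p, Continuous (K p))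
    (hb : ∀ T, ∃ M, ∀ p t, |t| ≤ T → |K p t| ≤ M) :
    IsSymbol (fun p t => (K p t : ℂ) * f p) where
  meas t := (Complex.measurable_ofReal.comp (hm t)).aestronglyMeasurable.mul
    f.continuous.aestronglyMeasurable
  cont p _ := (Complex.continuous_ofReal.comp (hc p)).mul continuous_const
  decay T k := by
    obtain ⟨M, hM⟩ := hb T
    obtain ⟨C, hC⟩ : ∃ C, ∀ p, (1 + ‖p‖) ^ k * ‖f p‖ ≤ C := ⟨_, fun p => by
      simpa only [norm_iteratedFDeriv_zero] using SchwartzMap.one_add_le_sup_seminorm_apply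
        (𝕜 := ℝ) (m := (k, 0)) (k := k) (n := 0) le_rfl le_rfl f p⟩
    refine ⟨|M| * C, fun p _ t ht => ?_⟩
    rw [norm_mul, Complex.norm_real, Real.norm_eq_abs, mul_left_comm]
    exact mul_le_mul ((hM p t ht).trans (le_abs_self M)) (hC p) (by positivity) (abs_nonneg _)

/-- The Euclidean length `r = √(ξ² + η²)` of the frequency `p = (ξ, η)`. -/
noncomputable def radius (p : ℝ × ℝ) : ℝ := Real.sqrt (p.1 ^ 2 + p.2 ^ 2)

theorem radius_sq (p : ℝ × ℝ) : radius p ^ 2 = p.1 ^ 2 + p.2 ^ 2 :=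
  Real.sq_sqrt (by positivity)

theorem continuous_radius : Continuous radius := by
  unfold radius; fun_prop

theorem radius_pos {p : ℝ × ℝ} (hp : p ≠ 0) : 0 < radius p := by
  refine Real.sqrt_pos.2 ?_
  by_contra h
  refine hp (Prod.ext ?_ ?_) <;> simp only [Prod.fst_zero, Prod.snd_zero] <;>
    nlinarith [sq_nonneg p.1, sq_nonneg p.2]

/-- The multiplier of `ĝ` in the solution formula: longitudinal and shear Duhamel integrals of
`sin (c r (t - s)) / (c r)`, weighted by `α` and `β`. -/
noncomputable def sinKernel (h : ℝ → ℝ) (cl cs : ℝ) (α β : ℝ × ℝ → ℝ) (p : ℝ × ℝ) (t : ℝ) : ℝ :=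
  α p * (sinDuhamel h (cl * radius p) t / (cl * radius p)) +
    β p * (sinDuhamel h (cs * radius p) t / (cs * radius p))

/-- The time derivative of `sinKernel` (away from `p = 0`): longitudinal and shear Duhamel integrals
of `cos (c r (t - s))`, weighted by `α` and `β`. -/
noncomputable def cosKernel (h : ℝ → ℝ) (cl cs : ℝ) (α β : ℝ × ℝ → ℝ) (p : ℝ × ℝ) (t : ℝ) : ℝ :=
  α p * cosDuhamel h (cl * radius p) t + β p * cosDuhamel h (cs * radius p) t

section Kernels
variable {h : ℝ → ℝ} {α β : ℝ × ℝ → ℝ}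

theorem abs_combination_le {a b x y M : ℝ} (ha : |a| ≤ 1) (hb : |b| ≤ 1)
    (hx : |x| ≤ M) (hy : |y| ≤ M) : |a * x + b * y| ≤ M + M := by
  refine (abs_add_le _ _).trans (add_le_add ?_ ?_) <;> rw [abs_mul]
  · exact (mul_le_of_le_one_left (abs_nonneg _) ha).trans hx
  · exact (mul_le_of_le_one_left (abs_nonneg _) hb).trans hy

theorem isSymbol_sinKernel (hh : Continuous h) (cl cs : ℝ) (hα : Measurable α) (hβ : Measurable β)
    (hα1 : ∀ p, |α p| ≤ 1) (hβ1 : ∀ p, |β p| ≤ 1) (f : SchwartzMap (ℝ × ℝ) ℂ) :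
    IsSymbol (fun p t => (sinKernel h cl cs α β p t : ℂ) * f p) := by
  refine isSymbol_kernel f _ (fun t => ?_) (fun p => ?_) fun T => ?_
  · have h1 := (continuous_sinDuhamel hh t).measurable
    have h2 := continuous_radius.measurable
    unfold sinKernel
    exact (hα.mul ((h1.comp (h2.const_mul cl)).div (h2.const_mul cl))).add
      (hβ.mul ((h1.comp (h2.const_mul cs)).div (h2.const_mul cs)))
  · have h1 : ∀ ω, Continuous (sinDuhamel h ω) := fun ω =>
      continuous_iff_continuousAt.2 fun t => (hasDerivAt_sinDuhamel hh ω t).continuousAt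
    exact (continuous_const.mul ((h1 _).div_const _)).add
      (continuous_const.mul ((h1 _).div_const _))
  · obtain ⟨M, -, hM⟩ := duhamel_bounds hh T
    exact ⟨M + M, fun p t ht => abs_combination_le (hα1 p) (hβ1 p)
      ((hM t ht).2 _).1 ((hM t ht).2 _).1⟩

theorem isSymbol_cosKernel (hh : Continuous h) (cl cs : ℝ) (hα : Measurable α) (hβ : Measurable β)
    (hα1 : ∀ p, |α p| ≤ 1) (hβ1 : ∀ p, |β p| ≤ 1) (f : SchwartzMap (ℝ × ℝ) ℂ) :
    IsSymbol (fun p t => (cosKernel h cl cs α β p t : ℂ) * f p) := by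
  refine isSymbol_kernel f _ (fun t => ?_) (fun p => ?_) fun T => ?_
  · have h1 := (continuous_cosDuhamel hh t).measurable
    have h2 := continuous_radius.measurable
    unfold cosKernel
    exact (hα.mul (h1.comp (h2.const_mul cl))).add (hβ.mul (h1.comp (h2.const_mul cs)))
  · have h1 : ∀ ω, Continuous (cosDuhamel h ω) := fun ω =>
      continuous_iff_continuousAt.2 fun t => (hasDerivAt_cosDuhamel hh ω t).continuousAt
    exact (continuous_const.mul (h1 _)).add (continuous_const.mul (h1 _))
  · obtain ⟨M, -, hM⟩ := duhamel_bounds hh T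
    exact ⟨M + M, fun p t ht => abs_combination_le (hα1 p) (hβ1 p)
      ((hM t ht).2 _).2 ((hM t ht).2 _).2⟩

theorem isSymbol_source (hh : Continuous h) (f : SchwartzMap (ℝ × ℝ) ℂ) :
    IsSymbol (fun p t => (h t : ℂ) * f p) := by
  refine isSymbol_kernel f (fun _ t => h t) (fun t => measurable_const) (fun p => hh) fun T => ?_
  obtain ⟨M, -, hM⟩ := duhamel_bounds hh T
  exact ⟨M, fun p t ht => (hM t ht).1⟩

theorem hasDerivAt_sinKernel (hh : Continuous h) {cl cs : ℝ} (hcl : 0 < cl) (hcs : 0 < cs)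
    {p : ℝ × ℝ} (hp : p ≠ 0) (t : ℝ) :
    HasDerivAt (sinKernel h cl cs α β p) (cosKernel h cl cs α β p t) t := by
  have hr := radius_pos hp
  have h1 := ((hasDerivAt_sinDuhamel hh (cl * radius p) t).div_const (cl * radius p)).const_mul (α p)
  have h2 := ((hasDerivAt_sinDuhamel hh (cs * radius p) t).div_const (cs * radius p)).const_mul (β p)
  rw [mul_div_cancel_left₀ _ (by positivity)] at h1 h2
  exact h1.add h2

theorem hasDerivAt_cosKernel (hh : Continuous h) (cl cs : ℝ) {p : ℝ × ℝ} (hp : p ≠ 0) (t : ℝ) :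
    HasDerivAt (cosKernel h cl cs α β p) ((α p + β p) * h t -
      radius p ^ 2 * sinKernel h cl cs (fun p => cl ^ 2 * α p) (fun p => cs ^ 2 * β p) p t) t := by
  have hr := radius_pos hp
  have h1 := (hasDerivAt_cosDuhamel hh (cl * radius p) t).const_mul (α p)
  have h2 := (hasDerivAt_cosDuhamel hh (cs * radius p) t).const_mul (β p)
  refine (h1.add h2).congr_deriv ?_
  simp only [sinKernel]
  field_simp
  ring

end Kernels

theorem abs_div_radius_sq_le {a : ℝ} {p : ℝ × ℝ} (h : |a| ≤ p.1 ^ 2 + p.2 ^ 2) :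
    |a / radius p ^ 2| ≤ 1 := by
  rw [radius_sq, abs_div, abs_of_nonneg (show 0 ≤ p.1 ^ 2 + p.2 ^ 2 by positivity)]
  exact div_le_one_of_le₀ h (by positivity)

theorem sinKernel_eq_integral {h : ℝ → ℝ} (hh : Continuous h) (cl cs : ℝ) (α β : ℝ × ℝ → ℝ)
    (p : ℝ × ℝ) (t : ℝ) : sinKernel h cl cs α β p t = ∫ s in (0:ℝ)..t,
      (Real.sin (cl * (t - s) * radius p) / (cl * radius p) * α p +
        Real.sin (cs * (t - s) * radius p) / (cs * radius p) * β p) * h s := by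
  rw [sinKernel, sinDuhamel, sinDuhamel, div_eq_mul_inv, div_eq_mul_inv,
    ← intervalIntegral.integral_mul_const, ← intervalIntegral.integral_mul_const,
    ← intervalIntegral.integral_const_mul, ← intervalIntegral.integral_const_mul,
    ← intervalIntegral.integral_add (Continuous.intervalIntegrable (by fun_prop) _ _)
      (Continuous.intervalIntegrable (by fun_prop) _ _)]
  refine intervalIntegral.integral_congr fun s _ => ?_
  simp only [div_eq_mul_inv, mul_right_comm _ (t - s)]
  ring


/-- The Fourier integral operator solution formulas for the plane-strain displacements
`u₁`, `u₂` solve the plane-strain equations of motion with body force `(0, g·h)`,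
with zero initial data. -/
theorem stmt_10 (lam mu rho : ℝ) (hrho : 0 < rho) (hmu : 0 < mu) (hlm : 0 < lam + 2 * mu)
    (cl cs : ℝ)
    (hcl : cl = Real.sqrt ((lam + 2 * mu) / rho))
    (hcs : cs = Real.sqrt (mu / rho))
    (g : SchwartzMap (ℝ × ℝ) ℝ)
    (ghat : ℝ × ℝ → ℂ)
    (hghat : ∀ p : ℝ × ℝ, ghat p =
      ∫ q : ℝ × ℝ, Complex.exp (-(Complex.I * ((q.1 * p.1 + q.2 * p.2 : ℝ) : ℂ))) *
        ((g q : ℝ) : ℂ))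
    (h : ℝ → ℝ) (hh : Continuous h)
    (uhat₁ uhat₂ : ℝ × ℝ → ℝ → ℂ)
    (huhat₁0 : ∀ t : ℝ, uhat₁ 0 t = 0)
    (huhat₂0 : ∀ t : ℝ, uhat₂ 0 t = ghat 0 * ∫ s in (0:ℝ)..t, (((t - s) * h s : ℝ) : ℂ))
    (huhat₁ : ∀ p : ℝ × ℝ, p ≠ 0 → ∀ t : ℝ, uhat₁ p t =
      ∫ s in (0:ℝ)..t,
        (((Real.sin (cl * (t - s) * Real.sqrt (p.1 ^ 2 + p.2 ^ 2)) /
            (cl * Real.sqrt (p.1 ^ 2 + p.2 ^ 2)) -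
          Real.sin (cs * (t - s) * Real.sqrt (p.1 ^ 2 + p.2 ^ 2)) /
            (cs * Real.sqrt (p.1 ^ 2 + p.2 ^ 2))) *
          (p.1 * p.2 / (Real.sqrt (p.1 ^ 2 + p.2 ^ 2)) ^ 2) * h s : ℝ) : ℂ) * ghat p)
    (huhat₂ : ∀ p : ℝ × ℝ, p ≠ 0 → ∀ t : ℝ, uhat₂ p t =
      ∫ s in (0:ℝ)..t,
        (((Real.sin (cl * (t - s) * Real.sqrt (p.1 ^ 2 + p.2 ^ 2)) /
            (cl * Real.sqrt (p.1 ^ 2 + p.2 ^ 2)) *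
            (p.2 ^ 2 / (Real.sqrt (p.1 ^ 2 + p.2 ^ 2)) ^ 2) +
          Real.sin (cs * (t - s) * Real.sqrt (p.1 ^ 2 + p.2 ^ 2)) /
            (cs * Real.sqrt (p.1 ^ 2 + p.2 ^ 2)) *
            (p.1 ^ 2 / (Real.sqrt (p.1 ^ 2 + p.2 ^ 2)) ^ 2)) * h s : ℝ) : ℂ) * ghat p)
    (u₁ u₂ : ℝ → ℝ → ℝ → ℂ)
    (hu₁ : ∀ x y t : ℝ, u₁ x y t = (((2 * Real.pi) ^ 2 : ℝ) : ℂ)⁻¹ *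
      ∫ p : ℝ × ℝ, Complex.exp (Complex.I * ((x * p.1 + y * p.2 : ℝ) : ℂ)) * uhat₁ p t)
    (hu₂ : ∀ x y t : ℝ, u₂ x y t = (((2 * Real.pi) ^ 2 : ℝ) : ℂ)⁻¹ *
      ∫ p : ℝ × ℝ, Complex.exp (Complex.I * ((x * p.1 + y * p.2 : ℝ) : ℂ)) * uhat₂ p t) :
    (∀ x y t : ℝ, Integrable (fun p : ℝ × ℝ =>
        Complex.exp (Complex.I * ((x * p.1 + y * p.2 : ℝ) : ℂ)) * uhat₁ p t)) ∧
    (∀ x y t : ℝ, Integrable (fun p : ℝ × ℝ =>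
        Complex.exp (Complex.I * ((x * p.1 + y * p.2 : ℝ) : ℂ)) * uhat₂ p t)) ∧
    ContDiff ℝ 2 (fun q : ℝ × ℝ × ℝ => u₁ q.1 q.2.1 q.2.2) ∧
    ContDiff ℝ 2 (fun q : ℝ × ℝ × ℝ => u₂ q.1 q.2.1 q.2.2) ∧
    (∀ x y t : ℝ,
      iteratedDeriv 2 (fun τ : ℝ => u₁ x y τ) t =
        ((1 / rho : ℝ) : ℂ) * (((lam + 2 * mu : ℝ) : ℂ) * iteratedDeriv 2 (fun x' => u₁ x' y t) x +
          ((mu : ℝ) : ℂ) * iteratedDeriv 2 (fun y' => u₁ x y' t) y +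
          ((lam + mu : ℝ) : ℂ) * deriv (fun x' => deriv (fun y' => u₂ x' y' t) y) x) ∧
      iteratedDeriv 2 (fun τ : ℝ => u₂ x y τ) t =
        ((1 / rho : ℝ) : ℂ) * (((lam + 2 * mu : ℝ) : ℂ) * iteratedDeriv 2 (fun y' => u₂ x y' t) y +
          ((mu : ℝ) : ℂ) * iteratedDeriv 2 (fun x' => u₂ x' y t) x +
          ((lam + mu : ℝ) : ℂ) * deriv (fun x' => deriv (fun y' => u₁ x' y' t) y) x) +
        ((g (x, y) * h t : ℝ) : ℂ)) ∧
    (∀ x y : ℝ, u₁ x y 0 = 0 ∧ deriv (fun τ : ℝ => u₁ x y τ) 0 = 0 ∧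
      u₂ x y 0 = 0 ∧ deriv (fun τ : ℝ => u₂ x y τ) 0 = 0) := by
  have hcl0 : 0 < cl := by rw [hcl]; exact Real.sqrt_pos.2 (by positivity)
  have hcs0 : 0 < cs := by rw [hcs]; exact Real.sqrt_pos.2 (by positivity)
  have hcl2 : cl ^ 2 = (lam + 2 * mu) / rho := by rw [hcl]; exact Real.sq_sqrt (by positivity)
  have hcs2 : cs ^ 2 = mu / rho := by rw [hcs]; exact Real.sq_sqrt (by positivity)
  obtain ⟨⟨f, hf⟩, hinv⟩ := fourier_facts g ghat hghat
  set c : ℂ := (((2 * Real.pi) ^ 2 : ℝ) : ℂ)⁻¹ with hc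
  have hc0 : (((2 * Real.pi) ^ 2 : ℝ) : ℂ) ≠ 0 := by
    exact_mod_cast (by positivity : ((2 * Real.pi) ^ 2 : ℝ) ≠ 0)
  let α₁ : ℝ × ℝ → ℝ := fun p => p.1 * p.2 / radius p ^ 2
  let β₁ : ℝ × ℝ → ℝ := fun p => -(p.1 * p.2) / radius p ^ 2
  let α₂ : ℝ × ℝ → ℝ := fun p => p.2 ^ 2 / radius p ^ 2
  let β₂ : ℝ × ℝ → ℝ := fun p => p.1 ^ 2 / radius p ^ 2
  have hrm := continuous_radius.measurable
  have mα₁ : Measurable α₁ := (measurable_fst.mul measurable_snd).div (hrm.pow_const 2)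
  have mβ₁ : Measurable β₁ := (measurable_fst.mul measurable_snd).neg.div (hrm.pow_const 2)
  have mα₂ : Measurable α₂ := (measurable_snd.pow_const 2).div (hrm.pow_const 2)
  have mβ₂ : Measurable β₂ := (measurable_fst.pow_const 2).div (hrm.pow_const 2)
  have hxy : ∀ p : ℝ × ℝ, |p.1 * p.2| ≤ p.1 ^ 2 + p.2 ^ 2 := fun p => abs_le.2
    ⟨by nlinarith [sq_nonneg (p.1 + p.2), sq_nonneg p.1, sq_nonneg p.2],
      by nlinarith [sq_nonneg (p.1 - p.2), sq_nonneg p.1, sq_nonneg p.2]⟩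
  have bα₁ : ∀ p, |α₁ p| ≤ 1 := fun p => abs_div_radius_sq_le (hxy p)
  have bβ₁ : ∀ p, |β₁ p| ≤ 1 := fun p => abs_div_radius_sq_le (by rw [abs_neg]; exact hxy p)
  have bα₂ : ∀ p, |α₂ p| ≤ 1 := fun p => abs_div_radius_sq_le (by
    rw [abs_of_nonneg (sq_nonneg _)]; nlinarith [sq_nonneg p.1])
  have bβ₂ : ∀ p, |β₂ p| ≤ 1 := fun p => abs_div_radius_sq_le (by
    rw [abs_of_nonneg (sq_nonneg _)]; nlinarith [sq_nonneg p.2])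
  -- `û₁ = sinKernel α₁ β₁ · ĝ` and `û₂ = sinKernel α₂ β₂ · ĝ` away from the origin.
  have e₁ : ∀ p, p ≠ 0 → ∀ t, uhat₁ p t = (sinKernel h cl cs α₁ β₁ p t : ℂ) * f p := by
    intro p hp t
    rw [huhat₁ p hp, intervalIntegral.integral_mul_const, intervalIntegral.integral_ofReal, hf,
      sinKernel_eq_integral hh]
    congr 2
    refine intervalIntegral.integral_congr fun s _ => ?_
    simp only [α₁, β₁, radius]
    ring
  have e₂ : ∀ p, p ≠ 0 → ∀ t, uhat₂ p t = (sinKernel h cl cs α₂ β₂ p t : ℂ) * f p := by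
    intro p hp t
    rw [huhat₂ p hp, intervalIntegral.integral_mul_const, intervalIntegral.integral_ofReal, hf,
      sinKernel_eq_integral hh]
    rfl
  have S₁ : IsSymbol uhat₁ :=
    (isSymbol_sinKernel hh cl cs mα₁ mβ₁ bα₁ bβ₁ f).congr e₁
  have S₂ : IsSymbol uhat₂ :=
    (isSymbol_sinKernel hh cl cs mα₂ mβ₂ bα₂ bβ₂ f).congr e₂
  have S₁' := isSymbol_cosKernel hh cl cs mα₁ mβ₁ bα₁ bβ₁ f
  have S₂' := isSymbol_cosKernel hh cl cs mα₂ mβ₂ bα₂ bβ₂ f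
  have SK := isSymbol_source hh f
  have d₁ : ∀ p, p ≠ 0 → ∀ t, HasDerivAt (fun t => c * uhat₁ p t)
      (c * ((cosKernel h cl cs α₁ β₁ p t : ℂ) * f p)) t := by
    intro p hp t
    rw [funext (e₁ p hp)]
    exact ((hasDerivAt_sinKernel hh hcl0 hcs0 hp t).ofReal_comp.mul_const _).const_mul c
  have d₂ : ∀ p, p ≠ 0 → ∀ t, HasDerivAt (fun t => c * uhat₂ p t)
      (c * ((cosKernel h cl cs α₂ β₂ p t : ℂ) * f p)) t := by
    intro p hp t
    rw [funext (e₂ p hp)]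
    exact ((hasDerivAt_sinKernel hh hcl0 hcs0 hp t).ofReal_comp.mul_const _).const_mul c
  -- The source `h ĝ` cancels in the first equation because `α₁ + β₁ = 0`.
  have main₁ := pde_of_symbol (S₁.const_mul c) (S₁'.const_mul c) (S₂.const_mul c)
    (S₂'.const_mul c) (SK.const_mul 0) d₁ d₂ ((1 / rho : ℝ) : ℂ) ((lam + 2 * mu : ℝ) : ℂ)
    ((mu : ℝ) : ℂ) ((lam + mu : ℝ) : ℂ) (by
      intro p hp t
      refine (((hasDerivAt_cosKernel hh cl cs hp t).ofReal_comp.mul_const _).const_mul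
        c).congr_deriv ?_
      have E : (α₁ p + β₁ p) * h t - radius p ^ 2 *
          sinKernel h cl cs (fun p => cl ^ 2 * α₁ p) (fun p => cs ^ 2 * β₁ p) p t =
          1 / rho * (-((lam + 2 * mu) * p.1 ^ 2 + mu * p.2 ^ 2) * sinKernel h cl cs α₁ β₁ p t -
            (lam + mu) * (p.1 * p.2) * sinKernel h cl cs α₂ β₂ p t) := by
        simp only [sinKernel, α₁, β₁, α₂, β₂, hcl2, hcs2, radius_sq, div_eq_mul_inv]
        ring
      rw [E, e₁ p hp, e₂ p hp]
      push_cast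
      linear_combination (-(1 / (rho : ℂ)) * (((lam : ℂ) + 2 * mu) * p.1 ^ 2 *
        (c * (sinKernel h cl cs α₁ β₁ p t * f p)) + mu * p.2 ^ 2 *
        (c * (sinKernel h cl cs α₁ β₁ p t * f p)) + ((lam : ℂ) + mu) * (p.1 * p.2) *
        (c * (sinKernel h cl cs α₂ β₂ p t * f p)))) * Complex.I_sq)
  -- It enters the second equation with coefficient `α₂ + β₂ = 1`.
  have main₂ := pde_of_symbol (S₂.const_mul c) (S₂'.const_mul c) (S₁.const_mul c)
    (S₁'.const_mul c) (SK.const_mul c) d₂ d₁ ((1 / rho : ℝ) : ℂ) ((mu : ℝ) : ℂ)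
    ((lam + 2 * mu : ℝ) : ℂ) ((lam + mu : ℝ) : ℂ) (by
      intro p hp t
      refine (((hasDerivAt_cosKernel hh cl cs hp t).ofReal_comp.mul_const _).const_mul
        c).congr_deriv ?_
      have hr : α₂ p + β₂ p = 1 := by
        have := (radius_pos hp).ne'
        simp only [α₂, β₂]
        rw [← add_div, add_comm, ← radius_sq, div_self (pow_ne_zero 2 this)]
      have E : radius p ^ 2 *
          sinKernel h cl cs (fun p => cl ^ 2 * α₂ p) (fun p => cs ^ 2 * β₂ p) p t =
          1 / rho * ((mu * p.1 ^ 2 + (lam + 2 * mu) * p.2 ^ 2) * sinKernel h cl cs α₂ β₂ p t +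
            (lam + mu) * (p.1 * p.2) * sinKernel h cl cs α₁ β₁ p t) := by
        simp only [sinKernel, α₁, β₁, α₂, β₂, hcl2, hcs2, radius_sq, div_eq_mul_inv]
        ring
      rw [hr, E, e₁ p hp, e₂ p hp]
      push_cast
      linear_combination (-(1 / (rho : ℂ)) * (((lam : ℂ) + 2 * mu) * p.2 ^ 2 *
        (c * (sinKernel h cl cs α₂ β₂ p t * f p)) + mu * p.1 ^ 2 *
        (c * (sinKernel h cl cs α₂ β₂ p t * f p)) + ((lam : ℂ) + mu) * (p.1 * p.2) *
        (c * (sinKernel h cl cs α₁ β₁ p t * f p)))) * Complex.I_sq)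
  have U₁ : u₁ = fun x y t => synth (fun p t => c * uhat₁ p t) (x, y, t) := by
    funext x y t
    rw [hu₁, synth_const_mul]
    rfl
  have U₂ : u₂ = fun x y t => synth (fun p t => c * uhat₂ p t) (x, y, t) := by
    funext x y t
    rw [hu₂, synth_const_mul]
    rfl
  have zero₁ : ∀ p, uhat₁ p 0 = 0 := fun p => by
    by_cases hp : p = 0
    · rw [hp, huhat₁0]
    · rw [huhat₁ p hp, intervalIntegral.integral_same]
  have zero₂ : ∀ p, uhat₂ p 0 = 0 := fun p => by
    by_cases hp : p = 0
    · rw [hp, huhat₂0, intervalIntegral.integral_same, mul_zero]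
    · rw [huhat₂ p hp, intervalIntegral.integral_same]
  refine ⟨S₁.integrable, S₂.integrable, ?_, ?_, fun x y t => ⟨?_, ?_⟩, fun x y => ⟨?_, ?_, ?_, ?_⟩⟩
  · rw [U₁]; exact main₁.1
  · rw [U₂]; exact main₂.1
  · rw [U₁, U₂]
    refine (main₁.2 x y t).trans ?_
    rw [synth_const_mul _ 0, zero_mul, add_zero]
  · rw [U₁, U₂]
    refine (main₂.2 x y t).trans ?_
    have hsrc : synth (fun p t => c * ((h t : ℂ) * f p)) (x, y, t) = ((g (x, y) * h t : ℝ) : ℂ) := by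
      have : synth (fun p t => (h t : ℂ) * f p) (x, y, t) =
          (h t : ℂ) * ((((2 * Real.pi) ^ 2 : ℝ) : ℂ) * ((g (x, y) : ℝ) : ℂ)) := by
        rw [← hinv, ← integral_const_mul]
        refine integral_congr_ae (.of_forall fun p => ?_)
        simp only [hf]
        ring
      rw [synth_const_mul, this, hc]
      push_cast at hc0 ⊢
      field_simp
    rw [hsrc]
    ring
  · rw [hu₁]; simp [zero₁]
  · rw [U₁]
    refine (hasDerivAt_synth_t (S₁.const_mul c) (S₁'.const_mul c) d₁ x y 0).deriv.trans ?_
    simp [synth, cosKernel, cosDuhamel]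
  · rw [hu₂]; simp [zero₂]
  · rw [U₂]
    refine (hasDerivAt_synth_t (S₂.const_mul c) (S₂'.const_mul c) d₂ x y 0).deriv.trans ?_
    simp [synth, cosKernel, cosDuhamel]
end
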